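/- arXiv:1710.02995 — 2 statements merged into one kernel-verified Lean document; each statement's English description precedes it below -/
import Mathlib

section
/- With S(√x; 0) = √2·x^{1/4}·Σ_{m ∈ ℕ, m ≤ √x} r₂(m)·(√x − m)^{1/2} and c₀ = 2^{3/2}π/3, one has limsup_{x→∞} x^{−1/2}·(S(√x; 0) − c₀·x) = +∞. -/
open Real

/-- `r₂(m)`: the number of representations of `m` as a sum of two squares of integers. -/
noncomputable def r2 (m : ℕ) : ℕ :=
  Set.ncard {p : ℤ × ℤ | p.1 ^ 2 + p.2 ^ 2 = (m : ℤ)}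

/-- `S(√x; 0) = √2·x^{1/4}·Σ_{m ∈ ℕ, m ≤ √x} r₂(m)·(√x − m)^{1/2}`. -/
noncomputable def Sx0 (x : ℝ) : ℝ :=
  Real.sqrt 2 * x ^ ((1 : ℝ) / 4) *
    ∑ m ∈ Finset.range (⌊Real.sqrt x⌋₊ + 1),
      (r2 m : ℝ) * (Real.sqrt x - m) ^ ((1 : ℝ) / 2)

open Real

section PartA
open MeasureTheory Set

lemma integrable_pow_exp (k : ℕ) {c : ℝ} (hc : 0 < c) :
    IntegrableOn (fun u : ℝ => u ^ k * rexp (-(c * u))) (Ioi 0) ∧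
    ∫ u in Ioi (0 : ℝ), u ^ k * rexp (-(c * u)) = k.factorial / c ^ (k + 1) := by
  have h := Real.integral_rpow_mul_exp_neg_mul_Ioi (a := k + 1) (r := c) (by positivity) hc
  have e : ∀ u : ℝ, u ^ ((k : ℝ) + 1 - 1) = u ^ k := by
    intro u; rw [add_sub_cancel_right, Real.rpow_natCast]
  simp_rw [e] at h
  have h2 : (1 / c) ^ ((k : ℝ) + 1) * Real.Gamma (k + 1) = k.factorial / c ^ (k + 1) := by
    rw [Real.Gamma_nat_eq_factorial]
    have : (1 / c) ^ ((k : ℝ) + 1) = (1 / c) ^ (k + 1) := by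
      rw [← Real.rpow_natCast]; push_cast; rfl
    rw [this, div_pow, one_pow]; ring
  rw [h2] at h
  refine ⟨?_, h⟩
  refine not_imp_comm.1 integral_undef ?_
  rw [h]
  positivity

lemma lint_mul_exp {c : ℝ} (hc : 0 < c) :
    ∫⁻ u in Ioi (0 : ℝ), ENNReal.ofReal (u * rexp (-(c * u))) = ENNReal.ofReal (1 / c ^ 2) := by
  obtain ⟨h1, h2⟩ := integrable_pow_exp 1 hc
  simp only [pow_one] at h1 h2
  rw [← ofReal_integral_eq_lintegral_ofReal h1, h2]
  · simp
  · rw [Filter.EventuallyLE, ae_restrict_iff' measurableSet_Ioi]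
    exact ae_of_all _ (fun x (hx : 0 < x) ↦ by simp only [Pi.zero_apply]; positivity)

lemma lint_exp {c : ℝ} (hc : 0 < c) :
    ∫⁻ u in Ioi (0 : ℝ), ENNReal.ofReal (rexp (-(c * u))) = ENNReal.ofReal (1 / c) := by
  obtain ⟨h1, h2⟩ := integrable_pow_exp 0 hc
  simp only [pow_zero, one_mul] at h1 h2
  rw [← ofReal_integral_eq_lintegral_ofReal h1, h2]
  · simp
  · exact ae_of_all _ (fun x ↦ by simp only [Pi.zero_apply]; positivity)

lemma cosh_bound {c : ℝ} (hc : 0 < c) (w : ℝ) :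
    Real.cosh w ^ 2 * rexp (-(c * Real.cosh w)) ≤ 12 / c ^ 3 * rexp (-w) := by
  have hch := Real.cosh_pos w
  have h1 := Real.pow_div_factorial_le_exp (x := c * Real.cosh w) (by positivity) 3
  have h2 : rexp w ≤ 2 * Real.cosh w := by
    rw [Real.cosh_eq]; linarith [Real.exp_pos (-w)]
  have h3 := Real.exp_pos (c * Real.cosh w)
  have h4 := Real.exp_pos w
  have h5 : (c * Real.cosh w) ^ 3 ≤ 6 * rexp (c * Real.cosh w) := by
    have : ((Nat.factorial 3 : ℕ) : ℝ) = 6 := by norm_num [Nat.factorial]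
    rw [this, div_le_iff₀ (by norm_num)] at h1
    linarith
  rw [Real.exp_neg, Real.exp_neg, ← div_eq_mul_inv, ← div_eq_mul_inv, div_div,
    div_le_div_iff₀ h3 (by positivity)]
  calc Real.cosh w ^ 2 * (c ^ 3 * rexp w) ≤ Real.cosh w ^ 2 * (c ^ 3 * (2 * Real.cosh w)) := by gcongr
    _ = 2 * (c * Real.cosh w) ^ 3 := by ring
    _ ≤ _ := by linarith

lemma int_parts {c : ℝ} (hc : 0 < c) :
    ∫⁻ w in Ioi (0 : ℝ), ENNReal.ofReal (c * Real.sinh w ^ 2 * rexp (-(c * Real.cosh w))) =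
    ∫⁻ w in Ioi (0 : ℝ), ENNReal.ofReal (Real.cosh w * rexp (-(c * Real.cosh w))) := by
  have hdom : IntegrableOn (fun w : ℝ => 12 / c ^ 3 * rexp (-w)) (Ioi 0) := by
    have := (integrable_pow_exp 0 one_pos).1
    simp only [pow_zero, one_mul] at this
    exact this.const_mul _
  have hb := cosh_bound hc
  have i1 : IntegrableOn (fun w : ℝ => c * Real.sinh w ^ 2 * rexp (-(c * Real.cosh w))) (Ioi 0) := by
    refine Integrable.mono' (hdom.const_mul c) ?_ (ae_of_all _ fun w => ?_)
    · exact Continuous.aestronglyMeasurable (by fun_prop)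
    · rw [Real.norm_of_nonneg (by positivity)]
      refine le_trans ?_ (mul_le_mul_of_nonneg_left (hb w) hc.le)
      rw [← mul_assoc]
      gcongr _ * ?_ * _
      rw [Real.cosh_sq]; linarith
  have i2 : IntegrableOn (fun w : ℝ => Real.cosh w * rexp (-(c * Real.cosh w))) (Ioi 0) := by
    refine Integrable.mono' hdom ?_ (ae_of_all _ fun w => ?_)
    · exact Continuous.aestronglyMeasurable (by fun_prop)
    · rw [Real.norm_of_nonneg (by positivity)]
      refine le_trans ?_ (hb w)
      gcongr
      nlinarith [Real.one_le_cosh w]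
  have key : ∫ w in Ioi (0 : ℝ), (Real.cosh w * rexp (-(c * Real.cosh w)) -
      c * Real.sinh w ^ 2 * rexp (-(c * Real.cosh w))) = 0 - Real.sinh 0 * rexp (-(c * Real.cosh 0)) := by
    refine integral_Ioi_of_hasDerivAt_of_tendsto' (f := fun w => Real.sinh w * rexp (-(c * Real.cosh w)))
      ?_ (i2.sub i1) ?_
    · intro w _
      have h1 := Real.hasDerivAt_sinh w
      have h2 : HasDerivAt (fun w => rexp (-(c * Real.cosh w)))
          (rexp (-(c * Real.cosh w)) * -(c * Real.sinh w)) w :=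
        (((Real.hasDerivAt_cosh w).const_mul c).neg).exp
      refine (h1.mul h2).congr_deriv ?_
      ring
    · have hz : Filter.Tendsto (fun w : ℝ => 12 / c ^ 3 * rexp (-w)) Filter.atTop (nhds 0) := by
        have := (Real.tendsto_exp_neg_atTop_nhds_zero).const_mul (12 / c ^ 3)
        simpa using this
      refine squeeze_zero_norm ?_ hz
      intro w
      rw [norm_mul, Real.norm_of_nonneg (Real.exp_pos _).le]
      refine le_trans ?_ (hb w)
      gcongr
      rw [Real.norm_eq_abs]
      have h1 := Real.cosh_sq w
      have h2 := Real.one_le_cosh w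
      refine abs_le_of_sq_le_sq' ?_ (by positivity) |> abs_le.2
      nlinarith [sq_nonneg (Real.cosh w ^ 2)]
  rw [integral_sub i2 i1] at key
  simp only [Real.sinh_zero, zero_mul, sub_zero] at key
  rw [← ofReal_integral_eq_lintegral_ofReal i1 (ae_of_all _ fun w => by
      simp only [Pi.zero_apply]; positivity),
    ← ofReal_integral_eq_lintegral_ofReal i2 (ae_of_all _ fun w => by
      simp only [Pi.zero_apply]; positivity)]
  congr 1
  linarith

lemma bessel_lhs {r s : ℝ} (hr : 0 < r) (hs : 0 < s) :
    ∫⁻ t in Ioi (0 : ℝ), ENNReal.ofReal (√(t ^ 2 - r ^ 2) * rexp (-(s * t))) =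
    ENNReal.ofReal (r / s) * ∫⁻ w in Ioi (0 : ℝ), ENNReal.ofReal (r * s * Real.sinh w ^ 2 * rexp (-(r * s * Real.cosh w))) := by
  have h1 : ∫⁻ t in Ioi (0 : ℝ), ENNReal.ofReal (√(t ^ 2 - r ^ 2) * rexp (-(s * t))) =
      ∫⁻ t in Ioi r, ENNReal.ofReal (√(t ^ 2 - r ^ 2) * rexp (-(s * t))) := by
    rw [← Ioc_union_Ioi_eq_Ioi hr.le, lintegral_union measurableSet_Ioi (Ioc_disjoint_Ioi le_rfl)]
    rw [setLIntegral_congr_fun (g := fun _ => 0) measurableSet_Ioc, lintegral_zero, zero_add]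
    intro t ht
    have : √(t ^ 2 - r ^ 2) = 0 := Real.sqrt_eq_zero_of_nonpos (by nlinarith [ht.1, ht.2])
    simp [this]
  have him : (fun w : ℝ => r * Real.cosh w) '' Ioi 0 = Ioi r := by
    ext t
    constructor
    · rintro ⟨w, hw, rfl⟩
      have := Real.one_lt_cosh.2 (ne_of_gt hw)
      simp only [mem_Ioi]
      nlinarith
    · intro ht
      have h1 : 1 < t / r := by rw [lt_div_iff₀ hr]; simpa using ht
      refine ⟨Real.arcosh (t / r), Real.arcosh_pos h1 , ?_⟩
      simp only
      rw [Real.cosh_arcosh h1.le]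
      field_simp
  have hinj : InjOn (fun w : ℝ => r * Real.cosh w) (Ioi 0) := by
    intro a ha b hb hab
    have : Real.cosh a = Real.cosh b := mul_left_cancel₀ hr.ne' hab
    have h2 := (Real.cosh_strictMonoOn.injOn) (Ioi_subset_Ici_self ha) (Ioi_subset_Ici_self hb) this
    exact h2
  rw [h1, ← him, lintegral_image_eq_lintegral_abs_deriv_mul measurableSet_Ioi
    (fun x _ => ((Real.hasDerivAt_cosh x).const_mul r).hasDerivWithinAt) hinj,
    ← lintegral_const_mul']
  · refine setLIntegral_congr_fun measurableSet_Ioi ?_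
    intro w hw
    have hsh : 0 < Real.sinh w := Real.sinh_pos_iff.2 hw
    have e : √((r * Real.cosh w) ^ 2 - r ^ 2) = r * Real.sinh w := by
      rw [show (r * Real.cosh w) ^ 2 - r ^ 2 = (r * Real.sinh w) ^ 2 by
        rw [mul_pow, Real.cosh_sq]; ring]
      exact Real.sqrt_sq (by positivity)
    simp only
    rw [e, abs_of_pos (by positivity), ← ENNReal.ofReal_mul (by positivity),
      ← ENNReal.ofReal_mul (by positivity)]
    congr 1
    rw [show s * (r * Real.cosh w) = r * s * Real.cosh w by ring]
    field_simp
  · exact ENNReal.ofReal_ne_top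

lemma bessel_rhs {r s : ℝ} (hr : 0 < r) (hs : 0 < s) :
    ∫⁻ u in Ioi (0 : ℝ), ENNReal.ofReal (rexp (-(u * s ^ 2 + r ^ 2 / (4 * u)))) =
    ENNReal.ofReal (r / s) * ∫⁻ w in Ioi (0 : ℝ), ENNReal.ofReal (Real.cosh w * rexp (-(r * s * Real.cosh w))) := by
  have him : (fun w : ℝ => r / (2 * s) * rexp w) '' univ = Ioi 0 := by
    ext t
    constructor
    · rintro ⟨w, _, rfl⟩
      simp only [mem_Ioi]; positivity
    · intro ht
      have ht : 0 < t := ht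
      refine ⟨Real.log (t / (r / (2 * s))), mem_univ _, ?_⟩
      simp only
      rw [Real.exp_log (by positivity)]
      field_simp
  have hinj : InjOn (fun w : ℝ => r / (2 * s) * rexp w) univ := by
    intro a _ b _ hab
    exact Real.exp_injective (mul_left_cancel₀ (by positivity) hab)
  conv_lhs => rw [← him]
  rw [lintegral_image_eq_lintegral_abs_deriv_mul MeasurableSet.univ
    (fun x _ => ((Real.hasDerivAt_exp x).const_mul _).hasDerivWithinAt) hinj]
  have e : ∀ w : ℝ, ENNReal.ofReal |r / (2 * s) * rexp w| *
      ENNReal.ofReal (rexp (-(r / (2 * s) * rexp w * s ^ 2 + r ^ 2 / (4 * (r / (2 * s) * rexp w))))) =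
      ENNReal.ofReal (r / (2 * s) * rexp w * rexp (-(r * s * Real.cosh w))) := by
    intro w
    rw [abs_of_pos (by positivity), ← ENNReal.ofReal_mul (by positivity)]
    congr 3
    rw [Real.cosh_eq, Real.exp_neg]
    field_simp
    ring
  simp only [e]
  rw [Measure.restrict_univ, ← lintegral_add_compl _ (measurableSet_Ioi (a := (0 : ℝ))), compl_Ioi,
    ← restrict_Iio_eq_restrict_Iic]
  have hneg : ∫⁻ w in Iio (0 : ℝ), ENNReal.ofReal (r / (2 * s) * rexp w * rexp (-(r * s * Real.cosh w)))
      = ∫⁻ w in Ioi (0 : ℝ), ENNReal.ofReal (r / (2 * s) * rexp (-w) * rexp (-(r * s * Real.cosh w))) := by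
    have him2 : (fun w : ℝ => -w) '' Ioi 0 = Iio 0 := by simp
    rw [← him2, lintegral_image_eq_lintegral_abs_deriv_mul measurableSet_Ioi
      (fun x _ => (hasDerivAt_neg x).hasDerivWithinAt) neg_injective.injOn]
    simp
  rw [hneg, ← lintegral_add_left (by fun_prop), ← lintegral_const_mul' _ _ ENNReal.ofReal_ne_top]
  refine lintegral_congr fun w => ?_
  rw [← ENNReal.ofReal_add (by positivity) (by positivity), ← ENNReal.ofReal_mul (by positivity)]
  congr 1
  rw [Real.cosh_eq w]
  field_simp

lemma bessel_id {r s : ℝ} (hr : 0 ≤ r) (hs : 0 < s) :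
    ∫⁻ t in Ioi (0 : ℝ), ENNReal.ofReal (√(t ^ 2 - r ^ 2) * rexp (-(s * t))) =
    ∫⁻ u in Ioi (0 : ℝ), ENNReal.ofReal (rexp (-(u * s ^ 2 + r ^ 2 / (4 * u)))) := by
  rcases hr.eq_or_lt with rfl | hr
  · have h1 := lint_mul_exp hs
    have h2 := lint_exp (c := s ^ 2) (by positivity)
    rw [← h2] at h1
    rw [setLIntegral_congr_fun (g := fun u => ENNReal.ofReal (u * rexp (-(s * u)))) measurableSet_Ioi, h1]
    · simp [mul_comm]
    · intro t ht
      have ht : 0 < t := ht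
      simp [Real.sqrt_sq ht.le]
  · rw [bessel_lhs hr hs, bessel_rhs hr hs, int_parts (by positivity)]

end PartA

open Real

section PartB
open MeasureTheory Set

noncomputable def qn (v : ℤ × ℤ) : ℝ := (v.1 : ℝ) ^ 2 + (v.2 : ℝ) ^ 2

lemma qn_nonneg (v : ℤ × ℤ) : 0 ≤ qn v := by unfold qn; positivity

noncomputable def NE (t : ℝ) : ENNReal := ∑' v : ℤ × ℤ, ENNReal.ofReal (√(t ^ 2 - qn v))

lemma measurable_NE : Measurable NE := by
  unfold NE
  exact Measurable.tsum fun v => by fun_prop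

lemma summable_gauss {a : ℝ} (ha : 0 < a) : Summable (fun n : ℤ => rexp (-(a * (n : ℝ) ^ 2))) := by
  have h := summable_pow_mul_jacobiTheta₂_term_bound 0 (T := a / π) (by positivity) 0
  refine h.congr fun n => ?_
  rw [pow_zero, one_mul]
  congr 1
  field_simp
  ring

lemma theta1 {u : ℝ} (hu : 0 < u) :
    ∑' n : ℤ, ENNReal.ofReal (rexp (-((n : ℝ) ^ 2 / (4 * u)))) =
    ENNReal.ofReal (√(4 * π * u)) * ∑' n : ℤ, ENNReal.ofReal (rexp (-(4 * π ^ 2 * u * (n : ℝ) ^ 2))) := by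
  have h := Real.tsum_exp_neg_mul_int_sq (a := 1 / (4 * π * u)) (by positivity)
  have e1 : ∀ n : ℤ, -π * (1 / (4 * π * u)) * (n : ℝ) ^ 2 = -((1 / (4 * u)) * (n : ℝ) ^ 2) := by
    intro n; field_simp
  have e2 : ∀ n : ℤ, -π / (1 / (4 * π * u)) * (n : ℝ) ^ 2 = -((4 * π ^ 2 * u) * (n : ℝ) ^ 2) := by
    intro n; field_simp
  have e3 : (1 : ℝ) / (1 / (4 * π * u)) ^ (1 / 2 : ℝ) = √(4 * π * u) := by
    rw [← Real.sqrt_eq_rpow, one_div (4 * π * u), Real.sqrt_inv, one_div, inv_inv]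
  simp only [e1, e2, e3] at h
  have e4 : ∀ n : ℤ, (n : ℝ) ^ 2 / (4 * u) = (1 / (4 * u)) * (n : ℝ) ^ 2 := by intro n; ring
  simp only [e4]
  rw [← ENNReal.ofReal_tsum_of_nonneg (fun n => (Real.exp_pos _).le) (summable_gauss (by positivity)),
    ← ENNReal.ofReal_tsum_of_nonneg (fun n => (Real.exp_pos _).le) (summable_gauss (by positivity)),
    h, ENNReal.ofReal_mul (by positivity)]

lemma tsum_sq (a : ℝ) : ∑' v : ℤ × ℤ, ENNReal.ofReal (rexp (-(a * qn v))) =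
    (∑' n : ℤ, ENNReal.ofReal (rexp (-(a * (n : ℝ) ^ 2)))) ^ 2 := by
  rw [sq, ← ENNReal.tsum_mul_right, ENNReal.tsum_prod']
  congr 1; ext m
  rw [← ENNReal.tsum_mul_left]
  congr 1; ext n
  rw [← ENNReal.ofReal_mul (by positivity), ← Real.exp_add]
  congr 2
  simp only [qn]; ring

lemma theta2 {u : ℝ} (hu : 0 < u) :
    ∑' v : ℤ × ℤ, ENNReal.ofReal (rexp (-(qn v / (4 * u)))) =
    ENNReal.ofReal (4 * π * u) * ∑' v : ℤ × ℤ, ENNReal.ofReal (rexp (-(4 * π ^ 2 * u * qn v))) := by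
  have e : ∀ v, qn v / (4 * u) = (1 / (4 * u)) * qn v := by intro v; ring
  have e4 : ∀ n : ℤ, (1 / (4 * u)) * (n : ℝ) ^ 2 = (n : ℝ) ^ 2 / (4 * u) := by intro n; ring
  simp only [e]
  rw [tsum_sq, tsum_sq]
  simp only [e4]
  rw [theta1 hu, mul_pow, ← ENNReal.ofReal_pow (by positivity), Real.sq_sqrt (by positivity)]

lemma laplace_real {s : ℝ} (hs : 0 < s) :
    ∫⁻ t in Ioi (0 : ℝ), NE t * ENNReal.ofReal (rexp (-(s * t))) =
    ∑' v : ℤ × ℤ, ENNReal.ofReal (4 * π / (s ^ 2 + 4 * π ^ 2 * qn v) ^ 2) := by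
  have h1 : ∀ t, NE t * ENNReal.ofReal (rexp (-(s * t))) =
      ∑' v : ℤ × ℤ, ENNReal.ofReal (√(t ^ 2 - √(qn v) ^ 2) * rexp (-(s * t))) := by
    intro t
    unfold NE
    rw [← ENNReal.tsum_mul_right]
    congr 1; ext v
    rw [Real.sq_sqrt (qn_nonneg v), ENNReal.ofReal_mul (by positivity)]
  simp only [h1]
  rw [lintegral_tsum (fun v => by fun_prop)]
  have h2 : ∀ v : ℤ × ℤ, ∫⁻ t in Ioi (0 : ℝ), ENNReal.ofReal (√(t ^ 2 - √(qn v) ^ 2) * rexp (-(s * t))) =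
      ∫⁻ u in Ioi (0 : ℝ), ENNReal.ofReal (rexp (-(u * s ^ 2))) * ENNReal.ofReal (rexp (-(qn v / (4 * u)))) := by
    intro v
    rw [bessel_id (Real.sqrt_nonneg _) hs]
    refine lintegral_congr fun u => ?_
    rw [Real.sq_sqrt (qn_nonneg v), ← ENNReal.ofReal_mul (by positivity), ← Real.exp_add]
    congr 2; ring
  simp only [h2]
  rw [← lintegral_tsum (fun v => by fun_prop)]
  have h3 : ∀ u ∈ Ioi (0 : ℝ), ∑' v : ℤ × ℤ, ENNReal.ofReal (rexp (-(u * s ^ 2))) * ENNReal.ofReal (rexp (-(qn v / (4 * u)))) =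
      ∑' v : ℤ × ℤ, ENNReal.ofReal (4 * π) * ENNReal.ofReal (u * rexp (-((s ^ 2 + 4 * π ^ 2 * qn v) * u))) := by
    intro u hu
    have hu : 0 < u := hu
    rw [ENNReal.tsum_mul_left, theta2 hu, ← ENNReal.tsum_mul_left, ← ENNReal.tsum_mul_left]
    congr 1; ext v
    rw [← ENNReal.ofReal_mul (by positivity), ← ENNReal.ofReal_mul (by positivity),
      ← ENNReal.ofReal_mul (by positivity)]
    congr 1
    rw [show -((s ^ 2 + 4 * π ^ 2 * qn v) * u) = -(u * s ^ 2) + -(4 * π ^ 2 * u * qn v) by ring,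
      Real.exp_add]
    ring
  rw [setLIntegral_congr_fun measurableSet_Ioi h3, lintegral_tsum (fun v => by fun_prop)]
  congr 1; ext v
  have := qn_nonneg v
  rw [lintegral_const_mul' _ _ ENNReal.ofReal_ne_top, lint_mul_exp (by positivity),
    ← ENNReal.ofReal_mul (by positivity)]
  congr 1; ring

lemma summable_inv_sq : Summable (fun v : ℤ × ℤ => 1 / (qn v) ^ 2) := by
  have h1 : Summable (fun n : ℤ => 1 / (1 + (n : ℝ) ^ 2)) := by
    have h := (Real.summable_one_div_int_pow (p := 2)).2 (by norm_num)
    have h' := h.add (summable_of_ne_finset_zero (s := {(0 : ℤ)}) (f := fun n : ℤ => if n = 0 then (1 : ℝ) else 0)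
      (by intro b hb; simp at hb; simp [hb]))
    refine Summable.of_nonneg_of_le (fun n => by positivity) (fun n => ?_) h'
    by_cases hn : n = 0
    · simp [hn]
    · have : (0 : ℝ) < (n : ℝ) ^ 2 := by positivity
      simp only [hn, if_false, add_zero]
      gcongr
      linarith
  have h2 := h1.mul_of_nonneg h1 (fun n => by positivity) (fun n => by positivity)
  refine Summable.of_nonneg_of_le (fun v => by positivity) (fun v => ?_) (h2.mul_left (9 / 4))
  by_cases hv : qn v = 0
  · simp [hv]; positivity
  · have h3 : 1 ≤ qn v := by
      have h4 : qn v = ((v.1 ^ 2 + v.2 ^ 2 : ℤ) : ℝ) := by simp [qn]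
      have h5 : 0 < qn v := lt_of_le_of_ne (qn_nonneg v) (Ne.symm hv)
      rw [h4] at h5 ⊢
      exact_mod_cast h5
    rw [one_div_mul_one_div, mul_one_div, div_le_div_iff₀ (by positivity) (by positivity)]
    have h6 : qn v = (v.1 : ℝ) ^ 2 + (v.2 : ℝ) ^ 2 := rfl
    nlinarith [sq_nonneg ((v.1 : ℝ) ^ 2 - (v.2 : ℝ) ^ 2)]

lemma qn_pos {v : ℤ × ℤ} (hv : v ≠ 0) : 0 < qn v := by
  refine lt_of_le_of_ne (qn_nonneg v) fun h => hv ?_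
  unfold qn at h
  have h1 : (v.1 : ℝ) = 0 := by nlinarith [sq_nonneg (v.1 : ℝ), sq_nonneg (v.2 : ℝ)]
  have h2 : (v.2 : ℝ) = 0 := by nlinarith [sq_nonneg (v.1 : ℝ), sq_nonneg (v.2 : ℝ)]
  ext
  · exact_mod_cast h1
  · exact_mod_cast h2

lemma summable_real_side {s : ℝ} (hs : 0 < s) :
    Summable (fun v : ℤ × ℤ => 4 * π / (s ^ 2 + 4 * π ^ 2 * qn v) ^ 2) := by
  have h1 := (summable_inv_sq.mul_left (4 * π / (4 * π ^ 2) ^ 2))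
  have h2 := h1.add (summable_of_ne_finset_zero (s := {(0 : ℤ × ℤ)})
    (f := fun n : ℤ × ℤ => if n = 0 then 4 * π / (s ^ 2) ^ 2 else 0)
      (by intro b hb; simp only [Finset.mem_singleton] at hb; simp [hb]))
  refine Summable.of_nonneg_of_le (fun n => by have := qn_nonneg n; positivity) (fun v => ?_) h2
  by_cases hv : v = 0
  · subst hv; simp [qn]
  · have := qn_pos hv
    simp only [hv, if_false, add_zero]
    rw [div_mul_div_comm, mul_one, ← mul_pow]
    gcongr
    nlinarith

end PartB

open Real

section PartC
open MeasureTheory Set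

noncomputable def NN (t : ℝ) : ℝ := ∑ m ∈ Finset.range (⌊t ^ 2⌋₊ + 1), (r2 m : ℝ) * √(t ^ 2 - m)

lemma NN_nonneg (t : ℝ) : 0 ≤ NN t := Finset.sum_nonneg fun m _ => by positivity

lemma finite_rep (m : ℕ) : {p : ℤ × ℤ | p.1 ^ 2 + p.2 ^ 2 = (m : ℤ)}.Finite := by
  refine Set.Finite.subset ((Set.finite_Icc (-(m : ℤ)) m).prod (Set.finite_Icc (-(m : ℤ)) m)) ?_
  rintro ⟨a, b⟩ h
  simp only [mem_ofPred_eq] at h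
  refine ⟨⟨?_, ?_⟩, ⟨?_, ?_⟩⟩ <;> simp only <;> nlinarith [sq_nonneg a, sq_nonneg b, sq_nonneg (a-1), sq_nonneg (a+1), sq_nonneg (b-1), sq_nonneg (b+1), Int.le_self_sq a, Int.le_self_sq b, Int.le_self_sq (-a), Int.le_self_sq (-b)]

lemma NE_eq (t : ℝ) : NE t = ENNReal.ofReal (NN t) := by
  let nv : ℤ × ℤ → ℕ := fun v => (v.1 ^ 2 + v.2 ^ 2).toNat
  have hnv : ∀ v, ((nv v : ℕ) : ℤ) = v.1 ^ 2 + v.2 ^ 2 := fun v => Int.toNat_of_nonneg (by positivity)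
  have hq : ∀ v, qn v = (nv v : ℝ) := by
    intro v
    have : ((nv v : ℕ) : ℝ) = (((nv v : ℕ) : ℤ) : ℝ) := by simp
    rw [this, hnv]; simp [qn]
  unfold NE
  rw [← (Equiv.sigmaFiberEquiv nv).tsum_eq, ENNReal.tsum_sigma']
  have h1 : ∀ m : ℕ, ∑' b : {v // nv v = m}, ENNReal.ofReal √(t ^ 2 - qn ((Equiv.sigmaFiberEquiv nv) ⟨m, b⟩))
      = ENNReal.ofReal ((r2 m : ℝ) * √(t ^ 2 - m)) := by
    intro m
    have h2 : ∀ b : {v // nv v = m}, ENNReal.ofReal √(t ^ 2 - qn ((Equiv.sigmaFiberEquiv nv) ⟨m, b⟩)) =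
        ENNReal.ofReal √(t ^ 2 - m) := by
      intro b
      rw [hq]
      simp [Equiv.sigmaFiberEquiv, b.2]
    simp only [h2]
    rw [ENNReal.ofReal_mul (by positivity)]
    have h3 := ENNReal.tsum_set_const {v | nv v = m} (ENNReal.ofReal √(t ^ 2 - m))
    refine h3.trans ?_
    congr 1
    have h4 : {v | nv v = m} = {p : ℤ × ℤ | p.1 ^ 2 + p.2 ^ 2 = (m : ℤ)} := by
      ext v
      simp only [mem_ofPred_eq]
      rw [← hnv v]
      norm_cast
    rw [h4, ← (finite_rep m).cast_ncard_eq]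
    simp [r2]
  simp only [h1]
  rw [tsum_eq_sum (s := Finset.range (⌊t ^ 2⌋₊ + 1))]
  · rw [NN, ENNReal.ofReal_sum_of_nonneg (fun m _ => by positivity)]
  · intro m hm
    simp only [Finset.mem_range, not_lt] at hm
    have : t ^ 2 < m := by
      have := Nat.lt_of_floor_lt (a := t ^ 2) (n := m) (by omega)
      exact this
    rw [Real.sqrt_eq_zero_of_nonpos (by linarith)]
    simp

lemma NN_eq (t : ℝ) : (NE t).toReal = NN t := by
  rw [NE_eq, ENNReal.toReal_ofReal (NN_nonneg t)]

lemma NN_mono {a b : ℝ} (ha : 0 ≤ a) (hab : a ≤ b) : NN a ≤ NN b := by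
  rw [← NN_eq, ← NN_eq]
  refine ENNReal.toReal_mono (by rw [NE_eq]; exact ENNReal.ofReal_ne_top) ?_
  unfold NE
  gcongr

lemma measurable_NN : Measurable NN := by
  have : NN = fun t => (NE t).toReal := funext fun t => (NN_eq t).symm
  rw [this]
  exact measurable_NE.ennreal_toReal

lemma integrable_NN {s : ℝ} (hs : 0 < s) :
    IntegrableOn (fun t => NN t * rexp (-(s * t))) (Ioi 0) ∧
    ∫ t in Ioi (0 : ℝ), NN t * rexp (-(s * t)) = ∑' v : ℤ × ℤ, 4 * π / (s ^ 2 + 4 * π ^ 2 * qn v) ^ 2 := by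
  have h := laplace_real hs
  rw [← ENNReal.ofReal_tsum_of_nonneg (fun n => by have := qn_nonneg n; positivity)
    (summable_real_side hs)] at h
  have h2 : ∀ t, NE t * ENNReal.ofReal (rexp (-(s * t))) = ENNReal.ofReal (NN t * rexp (-(s * t))) := by
    intro t
    rw [NE_eq, ENNReal.ofReal_mul (NN_nonneg t)]
  simp only [h2] at h
  have hm : AEStronglyMeasurable (fun t => NN t * rexp (-(s * t))) (volume.restrict (Ioi 0)) := by
    refine Measurable.aestronglyMeasurable ?_
    have := measurable_NN
    fun_prop
  have hnn : ∀ t, 0 ≤ NN t * rexp (-(s * t)) := fun t => mul_nonneg (NN_nonneg t) (Real.exp_pos _).le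
  constructor
  · refine ⟨hm, ?_⟩
    rw [hasFiniteIntegral_iff_ofReal (ae_of_all _ hnn), h]
    exact ENNReal.ofReal_lt_top
  · rw [integral_eq_lintegral_of_nonneg_ae (ae_of_all _ hnn) hm, h, ENNReal.toReal_ofReal]
    exact tsum_nonneg fun n => by have := qn_nonneg n; positivity

/-- the lattice measure -/
noncomputable def muN : Measure ℝ := (volume.restrict (Ioi 0)).withDensity NE

lemma integral_muN (f : ℝ → ℂ) : ∫ t, f t ∂muN = ∫ t in Ioi (0 : ℝ), (NN t : ℂ) * f t := by
  unfold muN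
  rw [integral_withDensity_eq_integral_toReal_smul measurable_NE (ae_of_all _ fun t => by
    rw [NE_eq]; exact ENNReal.ofReal_lt_top)]
  simp [NN_eq]

lemma mem_expSet {s : ℝ} (hs : 0 < s) : s ∈ ProbabilityTheory.integrableExpSet (fun t : ℝ => -t) muN := by
  unfold ProbabilityTheory.integrableExpSet muN
  simp only [mem_ofPred_eq]
  rw [integrable_withDensity_iff_integrable_smul' measurable_NE (ae_of_all _ fun t => by
    rw [NE_eq]; exact ENNReal.ofReal_lt_top)]
  refine (integrable_NN hs).1.congr (ae_of_all _ fun t => ?_)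
  simp [NN_eq]

/-- nonzero-frequency term -/
noncomputable def gt (s : ℂ) (v : ℤ × ℤ) : ℂ :=
  if v = 0 then 0 else 4 * π / (s ^ 2 + ((4 * π ^ 2 * qn v : ℝ) : ℂ)) ^ 2

lemma norm_lower {s : ℂ} (hs : 0 < s.re) {κ : ℝ} (hκ : 0 ≤ κ) :
    s.re * κ ≤ ‖s ^ 2 + (κ : ℂ)‖ * (s.re + ‖s‖) := by
  obtain ⟨k, hk, rfl⟩ : ∃ k : ℝ, 0 ≤ k ∧ κ = k ^ 2 := ⟨√κ, Real.sqrt_nonneg _, (Real.sq_sqrt hκ).symm⟩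
  have hfac : s ^ 2 + ((k ^ 2 : ℝ) : ℂ) = (s + Complex.I * k) * (s - Complex.I * k) := by
    push_cast
    linear_combination ((k : ℂ) ^ 2) * Complex.I_sq
  have hA : s.re ≤ ‖s + Complex.I * k‖ := by
    have := Complex.re_le_norm (s + Complex.I * k)
    simpa using this
  have hB : s.re ≤ ‖s - Complex.I * k‖ := by
    have := Complex.re_le_norm (s - Complex.I * k)
    simpa using this
  have hAB : 2 * ‖s‖ ≤ ‖s + Complex.I * k‖ + ‖s - Complex.I * k‖ := by
    have := norm_add_le (s + Complex.I * k) (s - Complex.I * k)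
    rw [show s + Complex.I * k + (s - Complex.I * k) = 2 * s by ring, norm_mul] at this
    simpa using this
  have hκ2 : k ^ 2 ≤ ‖s ^ 2 + ((k ^ 2 : ℝ) : ℂ)‖ + ‖s‖ ^ 2 := by
    have := norm_sub_le (s ^ 2 + ((k ^ 2 : ℝ) : ℂ)) (s ^ 2)
    rw [add_sub_cancel_left, norm_pow, Complex.norm_real, Real.norm_of_nonneg (by positivity)] at this
    exact this
  have h3 : s.re * ‖s‖ ≤ ‖s ^ 2 + ((k ^ 2 : ℝ) : ℂ)‖ := by
    rw [hfac, norm_mul]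
    set A := ‖s + Complex.I * k‖
    set B := ‖s - Complex.I * k‖
    rcases le_total A B with h | h
    · nlinarith
    · nlinarith
  have h4 := norm_nonneg s
  nlinarith

lemma norm_gt_le {s : ℂ} (hs : 0 < s.re) (v : ℤ × ℤ) :
    ‖gt s v‖ ≤ 4 * π * ((s.re + ‖s‖) / (s.re * (4 * π ^ 2))) ^ 2 * (1 / qn v ^ 2) := by
  unfold gt
  split_ifs with h
  · simp only [norm_zero]; positivity
  have hq := qn_pos h
  have h1 := norm_lower hs (κ := 4 * π ^ 2 * qn v) (by positivity)
  have h2 : 0 < s.re + ‖s‖ := by positivity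
  have h3 : s.re * (4 * π ^ 2 * qn v) / (s.re + ‖s‖) ≤ ‖s ^ 2 + ((4 * π ^ 2 * qn v : ℝ) : ℂ)‖ := by
    rw [div_le_iff₀ h2]; exact h1
  have h4 : 0 < s.re * (4 * π ^ 2 * qn v) / (s.re + ‖s‖) := by positivity
  rw [norm_div, norm_pow]
  have h5 : ‖(4 * π : ℂ)‖ = 4 * π := by
    rw [norm_mul, Complex.norm_real, Real.norm_of_nonneg pi_pos.le]; norm_num
  rw [h5]
  calc 4 * π / ‖s ^ 2 + ((4 * π ^ 2 * qn v : ℝ) : ℂ)‖ ^ 2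
      ≤ 4 * π / (s.re * (4 * π ^ 2 * qn v) / (s.re + ‖s‖)) ^ 2 := by gcongr
    _ = _ := by field_simp

lemma denom_ne {s : ℂ} (hs : 0 < s.re) {κ : ℝ} (hκ : 0 ≤ κ) : s ^ 2 + (κ : ℂ) ≠ 0 := by
  rcases hκ.eq_or_lt with rfl | hκ
  · simp only [Complex.ofReal_zero, add_zero]
    refine pow_ne_zero 2 fun h => ?_
    rw [h] at hs; simp at hs
  · intro h
    have := norm_lower hs hκ.le
    rw [h, norm_zero, zero_mul] at this
    have : 0 < s.re * κ := by positivity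
    linarith

noncomputable def RC (s : ℂ) : ℂ := 4 * π / s ^ 4 + ∑' v, gt s v

lemma diff_RC : DifferentiableOn ℂ RC {s | 0 < s.re} := by
  intro s0 hs0
  have hs0 : 0 < s0.re := hs0
  refine DifferentiableAt.differentiableWithinAt ?_
  let U : Set ℂ := {s | s0.re / 2 < s.re} ∩ Metric.ball 0 (‖s0‖ + 1)
  have hU : IsOpen U := (isOpen_lt continuous_const Complex.continuous_re).inter Metric.isOpen_ball
  have hmem : s0 ∈ U := ⟨by simp only [mem_ofPred_eq]; linarith, by simp⟩
  have hd : DifferentiableOn ℂ (fun s => ∑' v, gt s v) U := by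
    refine Complex.differentiableOn_tsum_of_summable_norm (u := fun v =>
      4 * π * ((‖s0‖ + 1 + (‖s0‖ + 1)) / (s0.re / 2 * (4 * π ^ 2))) ^ 2 * (1 / qn v ^ 2))
      (summable_inv_sq.mul_left _) ?_ hU ?_
    · intro v s hs
      have hs1 : s0.re / 2 < s.re := hs.1
      have hs2 : 0 < s.re := by linarith
      unfold gt
      split_ifs with h
      · exact differentiableWithinAt_const _
      · refine DifferentiableAt.differentiableWithinAt ?_
        refine DifferentiableAt.div (by fun_prop) (by fun_prop) ?_
        exact pow_ne_zero 2 (denom_ne hs2 (by have := qn_nonneg v; positivity))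
    · intro v s hs
      have hs1 : s0.re / 2 < s.re := hs.1
      have hs2 : 0 < s.re := by linarith
      have hs3 : ‖s‖ ≤ ‖s0‖ + 1 := by simpa using (mem_ball_zero_iff.1 hs.2).le
      refine (norm_gt_le hs2 v).trans ?_
      have := Complex.re_le_norm s
      gcongr
      linarith
  refine DifferentiableAt.add ?_ ((hd s0 hmem).differentiableAt (hU.mem_nhds hmem))
  refine DifferentiableAt.div (by fun_prop) (by fun_prop) (pow_ne_zero 4 fun h => ?_)
  rw [h] at hs0; simp at hs0

lemma RC_real {s : ℝ} (hs : 0 < s) :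
    ((∑' v : ℤ × ℤ, 4 * π / (s ^ 2 + 4 * π ^ 2 * qn v) ^ 2 : ℝ) : ℂ) = RC s := by
  rw [(summable_real_side hs).tsum_eq_add_tsum_ite 0]
  push_cast
  unfold RC
  congr 1
  · simp [qn]; ring
  · congr 1; ext v
    unfold gt
    split_ifs <;> push_cast <;> rfl

lemma laplace_complex {s : ℂ} (hs : 0 < s.re) :
    ∫ t in Ioi (0 : ℝ), (NN t : ℂ) * Complex.exp (-(s * t)) = RC s := by
  have hsub : {z : ℂ | 0 < z.re} ⊆
      {z | z.re ∈ interior (ProbabilityTheory.integrableExpSet (fun t : ℝ => -t) muN)} := by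
    intro z hz
    have : Ioi (0 : ℝ) ⊆ interior (ProbabilityTheory.integrableExpSet (fun t : ℝ => -t) muN) :=
      interior_maximal (fun s hs => mem_expSet hs) isOpen_Ioi
    exact this hz
  have hopen : IsOpen {z : ℂ | 0 < z.re} := isOpen_lt continuous_const Complex.continuous_re
  have a1 := (ProbabilityTheory.analyticOnNhd_complexMGF (X := fun t : ℝ => -t) (μ := muN)).mono hsub
  have a2 := diff_RC.analyticOnNhd hopen
  have hform : ∀ z : ℂ, ProbabilityTheory.complexMGF (fun t : ℝ => -t) muN z =
      ∫ t in Ioi (0 : ℝ), (NN t : ℂ) * Complex.exp (-(z * t)) := by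
    intro z
    unfold ProbabilityTheory.complexMGF
    rw [integral_muN]
    simp
  have hreal : ∀ x : ℝ, 0 < x → ProbabilityTheory.complexMGF (fun t : ℝ => -t) muN x = RC x := by
    intro x hx
    rw [hform, ← RC_real hx, ← (integrable_NN hx).2, ← integral_complex_ofReal]
    congr 1; ext t
    push_cast; rfl
  have hconn : IsPreconnected {z : ℂ | 0 < z.re} := (convex_halfSpace_re_gt 0).isPreconnected
  have := a1.eqOn_of_preconnected_of_frequently_eq a2 hconn (z₀ := 1) (by simp) ?_
  · rw [← hform]; exact this hs
  · have ht : Filter.Tendsto (fun n : ℕ => ((1 + 1 / ((n : ℝ) + 1) : ℝ) : ℂ)) Filter.atTop (nhdsWithin 1 {1}ᶜ) := by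
      refine tendsto_nhdsWithin_iff.2 ⟨?_, Filter.Eventually.of_forall fun n => ?_⟩
      · have h1 := (tendsto_one_div_add_atTop_nhds_zero_nat (𝕜 := ℝ)).const_add 1
        have h2 := (Complex.continuous_ofReal.tendsto _).comp h1
        simpa [Function.comp_def] using h2
      · simp only [mem_compl_iff, mem_singleton_iff]
        have : (0 : ℝ) < 1 / ((n : ℝ) + 1) := by positivity
        intro h
        have h' : (1 + 1 / ((n : ℝ) + 1) : ℝ) = 1 := by exact_mod_cast h
        linarith
    refine ht.frequently (Filter.Eventually.frequently (Filter.Eventually.of_forall fun n => ?_))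
    exact hreal _ (by positivity)

end PartC

open Real

/-- `K + K√p` as a subfield. -/
noncomputable def quadExt (K : Subfield ℝ) (p : ℕ) : Subfield ℝ :=
  K ⊔ Subfield.closure {√(p : ℝ)}

lemma mem_quadExt {K : Subfield ℝ} {p : ℕ} (hp : √(p : ℝ) ∉ K) {x : ℝ} (hx : x ∈ quadExt K p) :
    ∃ a ∈ K, ∃ b ∈ K, x = a + b * √(p : ℝ) := by
  have hs : √(p : ℝ) * √(p : ℝ) = p := Real.mul_self_sqrt (Nat.cast_nonneg p)
  have hpK : (p : ℝ) ∈ K := natCast_mem K p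
  let L : Subfield ℝ :=
    { carrier := {x | ∃ a ∈ K, ∃ b ∈ K, x = a + b * √(p : ℝ)}
      mul_mem' := by
        rintro _ _ ⟨a, ha, b, hb, rfl⟩ ⟨c, hc, d, hd, rfl⟩
        refine ⟨a * c + b * d * p, add_mem (mul_mem ha hc) (mul_mem (mul_mem hb hd) hpK),
          a * d + b * c, add_mem (mul_mem ha hd) (mul_mem hb hc), ?_⟩
        linear_combination (b * d) * hs
      one_mem' := ⟨1, one_mem K, 0, zero_mem K, by simp⟩
      add_mem' := by
        rintro _ _ ⟨a, ha, b, hb, rfl⟩ ⟨c, hc, d, hd, rfl⟩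
        exact ⟨a + c, add_mem ha hc, b + d, add_mem hb hd, by ring⟩
      zero_mem' := ⟨0, zero_mem K, 0, zero_mem K, by simp⟩
      neg_mem' := by
        rintro _ ⟨a, ha, b, hb, rfl⟩
        exact ⟨-a, neg_mem ha, -b, neg_mem hb, by ring⟩
      inv_mem' := by
        rintro _ ⟨a, ha, b, hb, rfl⟩
        by_cases h0 : a + b * √(p : ℝ) = 0
        · exact ⟨0, zero_mem K, 0, zero_mem K, by simp [h0]⟩
        have h1 : a - b * √(p : ℝ) ≠ 0 := by
          intro h
          by_cases hb0 : b = 0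
          · subst hb0; apply h0; simpa using h
          · apply hp
            have : √(p : ℝ) = a / b := by field_simp; linarith
            rw [this]; exact div_mem ha hb
        have h2 : a ^ 2 - b ^ 2 * p ≠ 0 := by
          have : a ^ 2 - b ^ 2 * p = (a + b * √(p : ℝ)) * (a - b * √(p : ℝ)) := by
            linear_combination (b ^ 2) * hs
          rw [this]; exact mul_ne_zero h0 h1
        have hD : a ^ 2 - b ^ 2 * p ∈ K := sub_mem (pow_mem ha 2) (mul_mem (pow_mem hb 2) hpK)
        refine ⟨a / (a ^ 2 - b ^ 2 * p), div_mem ha hD, -b / (a ^ 2 - b ^ 2 * p),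
          div_mem (neg_mem hb) hD, ?_⟩
        apply inv_eq_of_mul_eq_one_right
        field_simp
        linear_combination (-b ^ 2) * hs }
  have hle : quadExt K p ≤ L := by
    refine sup_le ?_ ?_
    · intro y hy
      exact ⟨y, hy, 0, zero_mem K, by simp⟩
    · rw [Subfield.closure_le]
      rintro _ rfl
      exact ⟨0, zero_mem K, 1, one_mem K, by simp⟩
  exact hle hx


/-- The field generated by square roots of the primes of a finite set. -/
noncomputable def KP (P : Finset ℕ) : Subfield ℝ :=
  Subfield.closure ((fun p : ℕ => √(p : ℝ)) '' (P : Set ℕ))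

lemma KP_insert (P : Finset ℕ) (p : ℕ) : KP (insert p P) ≤ quadExt (KP P) p := by
  unfold KP quadExt
  rw [← Subfield.closure_union]
  refine Subfield.closure_mono ?_
  rw [Finset.coe_insert, Set.image_insert_eq, Set.insert_eq, Set.union_comm]

lemma sqrt_mem_KP {P : Finset ℕ} {p : ℕ} (hp : p ∈ P) : √(p : ℝ) ∈ KP P :=
  Subfield.subset_closure ⟨p, hp, rfl⟩

lemma closure_empty_rat (x : ℝ) (hx : x ∈ KP ∅) : ∃ q : ℚ, (q : ℝ) = x := by
  have : KP ∅ ≤ (algebraMap ℚ ℝ).fieldRange := by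
    unfold KP
    rw [Subfield.closure_le]
    simp
  obtain ⟨q, hq⟩ := this hx
  exact ⟨q, hq⟩

lemma not_isSquare_prime_mul {P : Finset ℕ} (hP : ∀ q ∈ P, q.Prime) {p : ℕ} (hp : p.Prime)
    (hpP : p ∉ P) : ¬ IsSquare (p * ∏ q ∈ P, q) := by
  rintro ⟨k, hk⟩
  have h1 : p ∣ k * k := ⟨_, hk.symm⟩
  have h2 : p ∣ k := by rcases (Nat.Prime.dvd_mul hp).1 h1 with h | h <;> exact h
  obtain ⟨m, rfl⟩ := h2
  have h3 : ∏ q ∈ P, q = p * (m * m) := by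
    apply Nat.eq_of_mul_eq_mul_left hp.pos
    rw [hk]; ring
  have h4 : p ∣ ∏ q ∈ P, q := ⟨_, h3⟩
  obtain ⟨q, hq, hpq⟩ := (Prime.dvd_finsetProd_iff hp.prime _).1 h4
  have := (Nat.prime_dvd_prime_iff_eq hp (hP q hq)).1 hpq
  exact hpP (this ▸ hq)

lemma sqrt_mem_KP_imp (P : Finset ℕ) (hP : ∀ q ∈ P, q.Prime) :
    ∀ d : ℕ, √(d : ℝ) ∈ KP P → ∃ P' ⊆ P, IsSquare (d * ∏ q ∈ P', q) := by
  induction P using Finset.induction_on with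
  | empty =>
    intro d hd
    obtain ⟨q, hq⟩ := closure_empty_rat _ hd
    refine ⟨∅, le_rfl, ?_⟩
    by_contra h
    rw [Finset.prod_empty, mul_one] at h
    have := (irrational_sqrt_natCast_iff (n := d)).2 h
    exact this ⟨q, hq⟩
  | insert p P hpP ih =>
    intro d hd
    have hP' : ∀ q ∈ P, q.Prime := fun q hq => hP q (Finset.mem_insert_of_mem hq)
    have hp : p.Prime := hP p (Finset.mem_insert_self _ _)
    have ih := ih hP'
    have hpK : √(p : ℝ) ∉ KP P := by
      intro h
      obtain ⟨P', hsub, hsq⟩ := ih p h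
      exact not_isSquare_prime_mul (fun q hq => hP' q (hsub hq)) hp (fun h => hpP (hsub h)) hsq
    obtain ⟨a, ha, b, hb, hab⟩ := mem_quadExt hpK (KP_insert P p hd)
    have hs : √(p : ℝ) * √(p : ℝ) = p := Real.mul_self_sqrt (Nat.cast_nonneg p)
    have hd2 : √(d : ℝ) * √(d : ℝ) = d := Real.mul_self_sqrt (Nat.cast_nonneg d)
    by_cases ha0 : a = 0
    · have h1 : √((d * p : ℕ) : ℝ) ∈ KP P := by
        have : √((d * p : ℕ) : ℝ) = b * p := by
          rw [Nat.cast_mul, Real.sqrt_mul (Nat.cast_nonneg d), hab, ha0]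
          linear_combination b * hs
        rw [this]
        exact mul_mem hb (natCast_mem _ _)
      obtain ⟨P', hsub, hsq⟩ := ih _ h1
      refine ⟨insert p P', Finset.insert_subset_insert _ hsub, ?_⟩
      rw [Finset.prod_insert (fun h => hpP (hsub h)), ← mul_assoc]
      exact hsq
    · by_cases hb0 : b = 0
      · have h1 : √(d : ℝ) ∈ KP P := by
          rw [hab, hb0]; simpa using ha
        obtain ⟨P', hsub, hsq⟩ := ih _ h1
        exact ⟨P', hsub.trans (Finset.subset_insert _ _), hsq⟩
      · exfalso
        apply hpK
        have : √(p : ℝ) = (d - a ^ 2 - b ^ 2 * p) / (2 * a * b) := by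
          rw [eq_div_iff (by positivity)]
          rw [hab] at hd2
          linear_combination hd2 - b ^ 2 * hs
        rw [this]
        refine div_mem (sub_mem (sub_mem (natCast_mem _ _) (pow_mem ha 2))
          (mul_mem (pow_mem hb 2) (natCast_mem _ _))) (mul_mem (mul_mem ?_ ha) hb)
        exact ofNat_mem _ 2

lemma sqrt_not_mem_KP {P : Finset ℕ} (hP : ∀ q ∈ P, q.Prime) {p : ℕ} (hp : p.Prime)
    (hpP : p ∉ P) : √(p : ℝ) ∉ KP P := by
  intro h
  obtain ⟨P', hsub, hsq⟩ := sqrt_mem_KP_imp P hP p h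
  exact not_isSquare_prime_mul (fun q hq => hP q (hsub hq)) hp (fun h => hpP (hsub h)) hsq

/-- linear independence -/
lemma coeff_zero {P : Finset ℕ} (hP : ∀ q ∈ P, q.Prime) (e : ℕ → ℤ)
    (h : ∑ p ∈ P, (e p : ℝ) * √(p : ℝ) = 0) : ∀ p ∈ P, e p = 0 := by
  intro p hp
  by_contra he
  have he' : (e p : ℝ) ≠ 0 := by exact_mod_cast he
  rw [← Finset.add_sum_erase _ _ hp] at h
  have hnot := sqrt_not_mem_KP (P := P.erase p) (fun q hq => hP q (Finset.mem_of_mem_erase hq))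
    (hP p hp) (Finset.notMem_erase p P)
  apply hnot
  have : √(p : ℝ) = -(∑ x ∈ P.erase p, (e x : ℝ) * √(x : ℝ)) / e p := by
    field_simp; linarith
  rw [this]
  exact div_mem (neg_mem (sum_mem fun x hx => mul_mem (intCast_mem _ _) (sqrt_mem_KP hx)))
    (intCast_mem _ _)

/-- If the combination squares to an integer then at most one coefficient is nonzero. -/
lemma coeff_single {P : Finset ℕ} (hP : ∀ q ∈ P, q.Prime) (e : ℕ → ℤ) (n : ℤ)
    (h : (∑ p ∈ P, (e p : ℝ) * √(p : ℝ)) ^ 2 = n) {p : ℕ} (hp : p ∈ P) (he : e p ≠ 0) :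
    ∀ q ∈ P, q ≠ p → e q = 0 := by
  have he' : (e p : ℝ) ≠ 0 := by exact_mod_cast he
  rw [← Finset.add_sum_erase _ _ hp] at h
  have hP' : ∀ q ∈ P.erase p, q.Prime := fun q hq => hP q (Finset.mem_of_mem_erase hq)
  have hnot := sqrt_not_mem_KP hP' (hP p hp) (Finset.notMem_erase p P)
  have hs : √(p : ℝ) * √(p : ℝ) = p := Real.mul_self_sqrt (Nat.cast_nonneg p)
  set A := ∑ x ∈ P.erase p, (e x : ℝ) * √(x : ℝ) with hA
  have hAm : A ∈ KP (P.erase p) :=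
    sum_mem fun x hx => mul_mem (intCast_mem _ _) (sqrt_mem_KP hx)
  have hA0 : A = 0 := by
    by_contra hA0
    apply hnot
    have : √(p : ℝ) = (n - A ^ 2 - (e p : ℝ) ^ 2 * p) / (2 * A * e p) := by
      rw [eq_div_iff (by positivity)]
      linear_combination h - (e p : ℝ) ^ 2 * hs
    rw [this]
    exact div_mem (sub_mem (sub_mem (intCast_mem _ _) (pow_mem hAm 2))
          (mul_mem (pow_mem (intCast_mem _ _) 2) (natCast_mem _ _)))
          (mul_mem (mul_mem (ofNat_mem _ 2) hAm) (intCast_mem _ _))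
  intro q hq hqp
  exact coeff_zero hP' e hA0 q (Finset.mem_erase.2 ⟨hqp, hq⟩)

open Real

open ArithmeticFunction.vonMangoldt in
lemma not_summable_primes :
    ¬ Summable (fun n : ℕ => if n.Prime ∧ (n : ZMod 4) = 1 then 1 / (n : ℝ) else 0) := by
  intro hS
  obtain ⟨C, hC⟩ := LSeries_residueClass_lower_bound (q := 4) (a := 1) isUnit_one
  have hN := summable_residueClass_non_primes_div (q := 4) 1
  have htot : (Nat.totient 4 : ℝ) = 2 := by
    have : Nat.totient 4 = 2 := by decide
    rw [this]; norm_num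
  have hR0 : ∀ n, 0 ≤ residueClass (1 : ZMod 4) n := residueClass_nonneg _
  have key : Filter.Tendsto (fun x : ℝ => ∑' n : ℕ, (x - 1) * (residueClass (1 : ZMod 4) n / (n : ℝ) ^ x))
      (nhdsWithin 1 (Set.Ioi 1)) (nhds (∑' n : ℕ, (0 : ℝ))) := by
    refine tendsto_tsum_of_dominated_convergence (hS.add hN) ?_ ?_
    · intro n
      have h1 : Filter.Tendsto (fun x : ℝ => (x - 1) * (residueClass (1 : ZMod 4) n / (n : ℝ) ^ x))
          (nhds 1) (nhds ((1 - 1) * (residueClass (1 : ZMod 4) n / (n : ℝ) ^ (1 : ℝ)))) := by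
        rcases Nat.eq_zero_or_pos n with rfl | hn
        · have : residueClass (1 : ZMod 4) 0 = 0 := by simp [residueClass]
          simp [this]
        · have hn' : (0 : ℝ) < n := by exact_mod_cast hn
          have : ContinuousAt (fun x : ℝ => (n : ℝ) ^ x) 1 := continuousAt_const_rpow hn'.ne'
          refine Filter.Tendsto.mul (Filter.Tendsto.sub_const Filter.tendsto_id _) ?_
          refine Filter.Tendsto.div tendsto_const_nhds this ?_
          positivity
      rw [sub_self, zero_mul] at h1
      exact h1.mono_left nhdsWithin_le_nhds
    · filter_upwards [Ioo_mem_nhdsGT (show (1:ℝ) < 2 by norm_num)] with x hx n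
      have hx1 : 0 < x - 1 := by linarith [hx.1]
      have hx2 : x - 1 ≤ 1 := by linarith [hx.2]
      rw [Real.norm_of_nonneg (mul_nonneg hx1.le (div_nonneg (hR0 n) (by positivity)))]
      rcases Nat.eq_zero_or_pos n with rfl | hn
      · have : residueClass (1 : ZMod 4) 0 = 0 := by simp [residueClass]
        simp [this]
      have hn' : (0 : ℝ) < n := by exact_mod_cast hn
      have hn1 : (1 : ℝ) ≤ n := by exact_mod_cast hn
      by_cases hp : n.Prime
      · by_cases ha : (n : ZMod 4) = 1
        · have hr : residueClass (1 : ZMod 4) n = Real.log n := by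
            simp [residueClass, ha, ArithmeticFunction.vonMangoldt_apply_prime hp]
          simp only [hp, ha, and_self, if_true, zero_div, add_zero, hr]
          have e1 : (n : ℝ) ^ x = n * Real.exp ((x - 1) * Real.log n) := by
            rw [show x = 1 + (x - 1) by ring, Real.rpow_add hn', Real.rpow_one,
              Real.rpow_def_of_pos hn']
            ring_nf
          rw [e1]
          have e2 := Real.add_one_le_exp ((x - 1) * Real.log n)
          have e3 := Real.exp_pos ((x - 1) * Real.log n)
          rw [← mul_div_assoc, div_le_div_iff₀ (by positivity) hn']
          nlinarith
        · have hr : residueClass (1 : ZMod 4) n = 0 := by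
            simp [residueClass, ha]
          simp [hr, ha]
      · simp only [hp, false_and, if_false, zero_add]
        have : (n : ℝ) ≤ (n : ℝ) ^ x := by
          conv_lhs => rw [← Real.rpow_one (n : ℝ)]
          exact Real.rpow_le_rpow_of_exponent_le hn1 hx.1.le
        calc (x - 1) * (residueClass (1 : ZMod 4) n / (n : ℝ) ^ x)
            ≤ 1 * (residueClass (1 : ZMod 4) n / (n : ℝ)) := by
              gcongr
              · exact div_nonneg (hR0 n) (by positivity)
              · exact hR0 n
          _ = _ := one_mul _
  rw [tsum_zero] at key
  have lim2 : Filter.Tendsto (fun x : ℝ => 1 / 2 - C * (x - 1)) (nhdsWithin 1 (Set.Ioi 1))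
      (nhds (1 / 2 - C * (1 - 1))) := by
    refine Filter.Tendsto.mono_left (Continuous.tendsto ?_ _) nhdsWithin_le_nhds
    fun_prop
  have := le_of_tendsto_of_tendsto lim2 key (by
    filter_upwards [Ioo_mem_nhdsGT (show (1:ℝ) < 2 by norm_num)] with x hx
    have hx1 : 0 < x - 1 := by linarith [hx.1]
    have h := hC ⟨hx.1, hx.2.le⟩
    rw [tsum_mul_left]
    rw [htot] at h
    have h3 := mul_le_mul_of_nonneg_left h hx1.le
    refine le_trans (le_of_eq ?_) h3
    field_simp)
  norm_num at this

open Real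

section PartD
open MeasureTheory Set Filter Topology

lemma integrable_twist {h : ℝ → ℝ} {σ : ℝ} (hh : IntegrableOn (fun t => h t * rexp (-(σ * t))) (Ioi 0))
    (μ : ℝ) : IntegrableOn (fun t : ℝ => (h t : ℂ) * Complex.exp (-((σ - Complex.I * μ) * t))) (Ioi 0) := by
  have e : (fun t : ℝ => (h t : ℂ) * Complex.exp (-((σ - Complex.I * μ) * t))) =
      fun t : ℝ => Complex.exp (Complex.I * (μ * t : ℝ)) * ((h t * rexp (-(σ * t)) : ℝ) : ℂ) := by
    ext t
    push_cast
    rw [show -((σ - Complex.I * μ) * t : ℂ) = Complex.I * (μ * t) + -(σ * t) by ring, Complex.exp_add]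
    ring
  rw [e]
  refine Integrable.bdd_mul (c := 1) hh.ofReal ?_ ?_
  · exact Continuous.aestronglyMeasurable (by fun_prop)
  · refine ae_of_all _ fun t => ?_
    rw [mul_comm, Complex.norm_exp_ofReal_mul_I]

lemma lap_pow (k : ℕ) {s : ℂ} (hs : 0 < s.re) :
    ∫ t in Ioi (0 : ℝ), (t : ℂ) ^ k * Complex.exp (-(s * t)) = k.factorial / s ^ (k + 1) := by
  have hs0 : s ≠ 0 := by rintro rfl; simp at hs
  have hintg : ∀ k : ℕ, IntegrableOn (fun t : ℝ => (t : ℂ) ^ k * Complex.exp (-(s * t))) (Ioi 0) := by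
    intro k
    have h := integrable_twist (integrable_pow_exp k hs).1 (-s.im)
    have e : (s.re - Complex.I * ((-s.im : ℝ) : ℂ)) = s := by
      apply Complex.ext <;> simp
    rw [e] at h
    simpa using h
  induction k with
  | zero =>
    have h := integral_exp_mul_complex_Ioi (a := -s) (by simpa using hs) 0
    simp only [pow_zero, one_mul, ← neg_mul]
    rw [h]; simp
  | succ k ih =>
    have hd : ∀ t ∈ Ioi (0 : ℝ), HasDerivAt (fun t : ℝ => (t : ℂ) ^ (k + 1) * Complex.exp (-(s * t)))
        (((k : ℂ) + 1) * ((t : ℂ) ^ k * Complex.exp (-(s * t))) - s * ((t : ℂ) ^ (k + 1) * Complex.exp (-(s * t)))) t := by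
      intro t _
      have h1 : HasDerivAt (fun z : ℂ => z ^ (k + 1) * Complex.exp (-(s * z)))
          (((k + 1 : ℕ) : ℂ) * (t : ℂ) ^ k * Complex.exp (-(s * t)) +
            (t : ℂ) ^ (k + 1) * (Complex.exp (-(s * t)) * (-(s * 1)))) (t : ℂ) := by
        have a1 := hasDerivAt_pow (k + 1) (t : ℂ)
        have a2 := (((hasDerivAt_id (t : ℂ)).const_mul s).neg).cexp
        exact a1.mul a2
      convert h1.comp_ofReal using 1
      push_cast; ring
    have hi := ((hintg k).const_mul ((k : ℂ) + 1)).sub ((hintg (k + 1)).const_mul s)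
    have ht : Tendsto (fun t : ℝ => (t : ℂ) ^ (k + 1) * Complex.exp (-(s * t))) atTop (𝓝 0) := by
      rw [tendsto_zero_iff_norm_tendsto_zero]
      refine (tendsto_rpow_mul_exp_neg_mul_atTop_nhds_zero (k + 1 : ℕ) s.re hs).congr' ?_
      filter_upwards [eventually_gt_atTop 0] with t ht
      rw [norm_mul, norm_pow, Complex.norm_real, Real.norm_of_nonneg ht.le, Complex.norm_exp, Real.rpow_natCast]
      simp
    have hc : ContinuousWithinAt (fun t : ℝ => (t : ℂ) ^ (k + 1) * Complex.exp (-(s * t))) (Ici 0) 0 :=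
      Continuous.continuousWithinAt (by fun_prop)
    have h := integral_Ioi_of_hasDerivAt_of_tendsto hc hd hi ht
    rw [integral_sub ((hintg k).const_mul _) ((hintg (k + 1)).const_mul _), integral_const_mul,
      integral_const_mul, ih] at h
    simp at h
    have h' : s * ∫ t in Ioi (0 : ℝ), (t : ℂ) ^ (k + 1) * Complex.exp (-(s * t)) =
        (k + 1) * (k.factorial / s ^ (k + 1)) := by linear_combination -h
    have : (∫ t in Ioi (0 : ℝ), (t : ℂ) ^ (k + 1) * Complex.exp (-(s * t))) =
        (k + 1) * (k.factorial / s ^ (k + 1)) / s := by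
      rw [← h']; field_simp
    rw [this, Nat.factorial_succ]; push_cast
    field_simp
    ring

noncomputable def EE (t : ℝ) : ℝ := NN t - 2 * π / 3 * t ^ 3

lemma integrable_EE {σ : ℝ} (hσ : 0 < σ) : IntegrableOn (fun t => EE t * rexp (-(σ * t))) (Ioi 0) := by
  have h := (integrable_NN hσ).1.sub ((integrable_pow_exp 3 hσ).1.const_mul (2 * π / 3))
  refine h.congr (ae_of_all _ fun t => ?_)
  simp only [EE, Pi.sub_apply]; ring

lemma lap_EE {σ : ℝ} (hσ : 0 < σ) (μ : ℝ) :
    ∫ t in Ioi (0 : ℝ), (EE t : ℂ) * Complex.exp (-((σ - Complex.I * μ) * t)) =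
      ∑' v, gt (σ - Complex.I * μ) v := by
  have hre : 0 < (σ - Complex.I * μ : ℂ).re := by simpa using hσ
  have i1 := integrable_twist (integrable_NN hσ).1 μ
  have i2 := integrable_twist (integrable_pow_exp 3 hσ).1 μ
  have e : ∀ t : ℝ, (EE t : ℂ) * Complex.exp (-((σ - Complex.I * μ) * t)) =
      (NN t : ℂ) * Complex.exp (-((σ - Complex.I * μ) * t)) -
      (2 * π / 3 : ℂ) * (((t ^ 3 : ℝ) : ℂ) * Complex.exp (-((σ - Complex.I * μ) * t))) := by
    intro t; simp only [EE]; push_cast; ring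
  simp only [e]
  rw [integral_sub i1 (i2.const_mul _), laplace_complex hre, integral_const_mul]
  push_cast
  rw [lap_pow 3 hre, RC]
  simp [Nat.factorial]
  ring

noncomputable def limTerm (μ : ℝ) (v : ℤ × ℤ) : ℝ :=
  if v ≠ 0 ∧ 4 * π ^ 2 * qn v = μ ^ 2 then 1 / (4 * π * qn v) else 0

lemma limTerm_nonneg (μ : ℝ) (v : ℤ × ℤ) : 0 ≤ limTerm μ v := by
  unfold limTerm
  have := qn_nonneg v
  split_ifs <;> positivity

lemma summable_limTerm (μ : ℝ) : Summable (limTerm μ) := by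
  refine Summable.of_nonneg_of_le (limTerm_nonneg μ) (fun v => ?_)
    (summable_inv_sq.mul_left (μ ^ 2 / (4 * π ^ 2) / (4 * π)))
  unfold limTerm
  split_ifs with h
  · have := qn_pos h.1
    rw [← h.2]
    refine le_of_eq ?_
    field_simp
  · positivity

lemma term_lim (μ : ℝ) (v : ℤ × ℤ) :
    Tendsto (fun σ : ℝ => (σ : ℂ) ^ 2 * gt (σ - Complex.I * μ) v) (𝓝[>] 0)
      (𝓝 ((-(limTerm μ v) : ℝ) : ℂ)) := by
  unfold gt limTerm
  by_cases hv : v = 0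
  · simp [hv]
  simp only [hv, if_false, ne_eq, not_false_eq_true, true_and]
  have hq := qn_pos hv
  by_cases hk : 4 * π ^ 2 * qn v = μ ^ 2
  · simp only [hk, if_true]
    have hμ : μ ≠ 0 := by
      intro h; rw [h] at hk
      have : 0 < 4 * π ^ 2 * qn v := by positivity
      rw [hk] at this; simp at this
    have hμc : (μ : ℂ) ≠ 0 := by exact_mod_cast hμ
    have h1 : Tendsto (fun σ : ℝ => (4 * π : ℂ) / ((σ : ℂ) - 2 * Complex.I * μ) ^ 2) (𝓝[>] 0)
        (𝓝 ((4 * π : ℂ) / (((0 : ℝ) : ℂ) - 2 * Complex.I * μ) ^ 2)) := by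
      refine Tendsto.mono_left ?_ nhdsWithin_le_nhds
      refine Tendsto.div tendsto_const_nhds ?_ ?_
      · refine Continuous.tendsto (f := fun σ : ℝ => ((σ : ℂ) - 2 * Complex.I * μ) ^ 2) ?_ 0
        fun_prop
      · simp [hμ]
    have hlim : (4 * π : ℂ) / (((0 : ℝ) : ℂ) - 2 * Complex.I * μ) ^ 2 = ((-(1 / (4 * π * qn v)) : ℝ) : ℂ) := by
      have e1 : (((0 : ℝ) : ℂ) - 2 * Complex.I * μ) ^ 2 = ((-(4 * μ ^ 2) : ℝ) : ℂ) := by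
        push_cast
        linear_combination (4 * (μ : ℂ) ^ 2) * Complex.I_sq
      rw [e1, ← hk]
      have : (4 * π : ℂ) = ((4 * π : ℝ) : ℂ) := by push_cast; rfl
      rw [this, ← Complex.ofReal_div]
      congr 1
      field_simp
    rw [hlim] at h1
    refine h1.congr' ?_
    filter_upwards [self_mem_nhdsWithin] with σ hσ
    have hσ' : (σ : ℂ) ≠ 0 := by exact_mod_cast (ne_of_gt hσ)
    have e2 : ((σ : ℂ) - Complex.I * μ) ^ 2 + ((μ ^ 2 : ℝ) : ℂ) = σ * ((σ : ℂ) - 2 * Complex.I * μ) := by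
      push_cast
      linear_combination ((μ : ℂ) ^ 2) * Complex.I_sq
    rw [e2, mul_pow]
    field_simp
  · simp only [hk, if_false]
    have h1 : Tendsto (fun σ : ℝ => (σ : ℂ) ^ 2 * (4 * π / (((σ : ℂ) - Complex.I * μ) ^ 2 + ((4 * π ^ 2 * qn v : ℝ) : ℂ)) ^ 2)) (𝓝[>] 0)
        (𝓝 (((0 : ℝ) : ℂ) ^ 2 * (4 * π / ((((0 : ℝ) : ℂ) - Complex.I * μ) ^ 2 + ((4 * π ^ 2 * qn v : ℝ) : ℂ)) ^ 2))) := by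
      refine Tendsto.mono_left ?_ nhdsWithin_le_nhds
      refine Tendsto.mul ?_ (Tendsto.div tendsto_const_nhds ?_ ?_)
      · exact Continuous.tendsto (f := fun σ : ℝ => (σ : ℂ) ^ 2) (by fun_prop) 0
      · exact Continuous.tendsto (f := fun σ : ℝ => (((σ : ℂ) - Complex.I * μ) ^ 2 + ((4 * π ^ 2 * qn v : ℝ) : ℂ)) ^ 2) (by fun_prop) 0
      · have e1 : (((0 : ℝ) : ℂ) - Complex.I * μ) ^ 2 + ((4 * π ^ 2 * qn v : ℝ) : ℂ) = ((4 * π ^ 2 * qn v - μ ^ 2 : ℝ) : ℂ) := by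
          push_cast
          linear_combination ((μ : ℂ) ^ 2) * Complex.I_sq
        rw [e1]
        refine pow_ne_zero 2 ?_
        rw [Complex.ofReal_ne_zero]
        exact sub_ne_zero.2 hk
    simpa using h1

lemma lim_EE (μ : ℝ) :
    Tendsto (fun σ : ℝ => (σ : ℂ) ^ 2 * ∫ t in Ioi (0 : ℝ), (EE t : ℂ) * Complex.exp (-((σ - Complex.I * μ) * t)))
      (𝓝[>] 0) (𝓝 ((-(∑' v, limTerm μ v) : ℝ) : ℂ)) := by
  have h : Tendsto (fun σ : ℝ => ∑' v, (σ : ℂ) ^ 2 * gt (σ - Complex.I * μ) v) (𝓝[>] 0)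
      (𝓝 (∑' v, ((-(limTerm μ v) : ℝ) : ℂ))) := by
    refine tendsto_tsum_of_dominated_convergence
      (summable_inv_sq.mul_left (4 * π * ((2 + |μ|) / (4 * π ^ 2)) ^ 2)) (term_lim μ) ?_
    filter_upwards [Ioo_mem_nhdsGT (show (0:ℝ) < 1 by norm_num)] with σ hσ v
    have hσ0 : 0 < σ := hσ.1
    have hre : 0 < (σ - Complex.I * μ : ℂ).re := by simpa using hσ0
    have hre' : (σ - Complex.I * μ : ℂ).re = σ := by simp
    have hn : ‖(σ - Complex.I * μ : ℂ)‖ ≤ 1 + |μ| := by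
      refine (norm_sub_le _ _).trans ?_
      simp only [norm_mul, Complex.norm_real, Complex.norm_I, one_mul, Real.norm_eq_abs]
      rw [abs_of_pos hσ0]
      linarith [hσ.2]
    have hb := norm_gt_le hre v
    rw [hre'] at hb
    rw [norm_mul, norm_pow, Complex.norm_real, Real.norm_of_nonneg hσ0.le]
    calc σ ^ 2 * ‖gt (σ - Complex.I * μ) v‖
        ≤ σ ^ 2 * (4 * π * ((σ + ‖(σ - Complex.I * μ : ℂ)‖) / (σ * (4 * π ^ 2))) ^ 2 * (1 / qn v ^ 2)) := by gcongr
      _ = 4 * π * ((σ + ‖(σ - Complex.I * μ : ℂ)‖) / (4 * π ^ 2)) ^ 2 * (1 / qn v ^ 2) := by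
          rw [← div_div, div_pow _ (4 * π ^ 2), div_pow _ σ, div_pow _ (4 * π ^ 2)]
          field_simp
      _ ≤ _ := by
          have hle : σ + ‖(σ - Complex.I * μ : ℂ)‖ ≤ 2 + |μ| := by linarith [hσ.2]
          gcongr 4 * π * (?_ / (4 * π ^ 2)) ^ 2 * (1 / qn v ^ 2)
  have e : ∑' v, ((-(limTerm μ v) : ℝ) : ℂ) = ((-(∑' v, limTerm μ v) : ℝ) : ℂ) := by
    rw [← tsum_neg, Complex.ofReal_tsum]
  rw [e] at h
  refine h.congr' ?_
  filter_upwards [self_mem_nhdsWithin] with σ hσ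
  rw [lap_EE hσ, tsum_mul_left]

lemma integrable_lin {σ : ℝ} (hσ : 0 < σ) (A D : ℝ) :
    IntegrableOn (fun t => (A * t + D) * rexp (-(σ * t))) (Ioi 0) := by
  have h := ((integrable_pow_exp 1 hσ).1.const_mul A).add ((integrable_pow_exp 0 hσ).1.const_mul D)
  refine h.congr (ae_of_all _ fun t => ?_)
  simp only [Pi.add_apply]; ring

lemma lim_lin (A D μ : ℝ) :
    Tendsto (fun σ : ℝ => (σ : ℂ) ^ 2 * ∫ t in Ioi (0 : ℝ), ((A * t + D : ℝ) : ℂ) * Complex.exp (-((σ - Complex.I * μ) * t)))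
      (𝓝[>] 0) (𝓝 ((if μ = 0 then A else 0 : ℝ) : ℂ)) := by
  have h1 : ∀ σ : ℝ, 0 < σ → (σ : ℂ) ^ 2 * ∫ t in Ioi (0 : ℝ), ((A * t + D : ℝ) : ℂ) * Complex.exp (-((σ - Complex.I * μ) * t)) =
      A * (σ : ℂ) ^ 2 / (σ - Complex.I * μ) ^ 2 + D * (σ : ℂ) ^ 2 / (σ - Complex.I * μ) := by
    intro σ hσ
    have hre : 0 < (σ - Complex.I * μ : ℂ).re := by simpa using hσ
    have i1 := integrable_twist (integrable_pow_exp 1 hσ).1 μ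
    have i2 := integrable_twist (integrable_pow_exp 0 hσ).1 μ
    have e : ∀ t : ℝ, ((A * t + D : ℝ) : ℂ) * Complex.exp (-((σ - Complex.I * μ) * t)) =
      (A : ℂ) * (((t ^ 1 : ℝ) : ℂ) * Complex.exp (-((σ - Complex.I * μ) * t))) +
      (D : ℂ) * (((t ^ 0 : ℝ) : ℂ) * Complex.exp (-((σ - Complex.I * μ) * t))) := by
      intro t; push_cast; ring
    simp only [e]
    rw [integral_add (i1.const_mul _) (i2.const_mul _), integral_const_mul, integral_const_mul]
    simp only [Complex.ofReal_pow]
    rw [lap_pow 1 hre, lap_pow 0 hre]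
    simp
    ring
  have hz : ∀ c : ℂ, Tendsto (fun σ : ℝ => c * (σ : ℂ)) (𝓝[>] 0) (𝓝 0) := by
    intro c
    refine Tendsto.mono_left ?_ nhdsWithin_le_nhds
    have := Continuous.tendsto (f := fun σ : ℝ => c * (σ : ℂ)) (by fun_prop) 0
    simpa using this
  by_cases hμ : μ = 0
  · simp only [hμ, if_true]
    have h2 := (tendsto_const_nhds (x := (A : ℂ)) (f := 𝓝[>] (0 : ℝ))).add (hz D)
    rw [add_zero] at h2
    refine h2.congr' ?_
    filter_upwards [self_mem_nhdsWithin] with σ hσ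
    have := h1 σ hσ
    rw [hμ] at this
    rw [this]
    have hσ' : (σ : ℂ) ≠ 0 := by exact_mod_cast (ne_of_gt hσ)
    simp
    field_simp
  · simp only [hμ, if_false]
    have h2 : Tendsto (fun σ : ℝ => A * (σ : ℂ) ^ 2 / (σ - Complex.I * μ) ^ 2 + D * (σ : ℂ) ^ 2 / (σ - Complex.I * μ))
        (𝓝[>] 0) (𝓝 (A * ((0 : ℝ) : ℂ) ^ 2 / (((0 : ℝ) : ℂ) - Complex.I * μ) ^ 2 + D * ((0 : ℝ) : ℂ) ^ 2 / (((0 : ℝ) : ℂ) - Complex.I * μ))) := by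
      refine Tendsto.mono_left ?_ nhdsWithin_le_nhds
      refine Tendsto.add (Tendsto.div ?_ ?_ ?_) (Tendsto.div ?_ ?_ ?_)
      · exact Continuous.tendsto (f := fun σ : ℝ => A * (σ : ℂ) ^ 2) (by fun_prop) 0
      · exact Continuous.tendsto (f := fun σ : ℝ => ((σ : ℂ) - Complex.I * μ) ^ 2) (by fun_prop) 0
      · simp [hμ]
      · exact Continuous.tendsto (f := fun σ : ℝ => D * (σ : ℂ) ^ 2) (by fun_prop) 0
      · exact Continuous.tendsto (f := fun σ : ℝ => ((σ : ℂ) - Complex.I * μ)) (by fun_prop) 0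
      · simp [hμ]
    have h3 : (A * ((0 : ℝ) : ℂ) ^ 2 / (((0 : ℝ) : ℂ) - Complex.I * μ) ^ 2 + D * ((0 : ℝ) : ℂ) ^ 2 / (((0 : ℝ) : ℂ) - Complex.I * μ)) = ((0 : ℝ) : ℂ) := by simp
    rw [h3] at h2
    refine h2.congr' ?_
    filter_upwards [self_mem_nhdsWithin] with σ hσ
    rw [h1 σ hσ]

end PartD

open Real

section PartG
open MeasureTheory Set Filter Topology

noncomputable def wt (e : ℤ) : ℝ := if e = 0 then 1 else -(1 / 2)

def TT : Finset ℤ := {-1, 0, 1}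

noncomputable def Kf (P : Finset ℕ) (t : ℝ) : ℝ := ∏ p : P, (1 - Real.cos (2 * π * √((p : ℕ) : ℝ) * t))

noncomputable def Wt (P : Finset ℕ) (x : P → ℤ) : ℝ := ∏ p : P, wt (x p)

noncomputable def Mf (P : Finset ℕ) (x : P → ℤ) : ℝ := 2 * π * ∑ p : P, (x p : ℝ) * √((p : ℕ) : ℝ)

noncomputable def XX (P : Finset ℕ) : Finset (P → ℤ) := Fintype.piFinset (fun _ => TT)

lemma Kf_nonneg (P : Finset ℕ) (t : ℝ) : 0 ≤ Kf P t :=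
  Finset.prod_nonneg fun p _ => by linarith [Real.cos_le_one (2 * π * √((p : ℕ) : ℝ) * t)]

lemma factor_expand (a t : ℝ) : ((1 - Real.cos (2 * π * a * t) : ℝ) : ℂ) =
    ∑ e ∈ TT, (wt e : ℂ) * Complex.exp (Complex.I * ((2 * π * ((e : ℝ) * a) * t : ℝ) : ℂ)) := by
  have h : ((2 * π * a * t : ℝ) : ℂ) = 2 * π * a * t := by push_cast; ring
  rw [TT, Finset.sum_insert (by decide), Finset.sum_insert (by decide), Finset.sum_singleton]
  push_cast
  rw [Complex.cos]
  simp [wt]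
  rw [show Complex.I * (2 * π * a * t) = 2 * π * a * t * Complex.I by ring]
  ring

lemma Kf_expand (P : Finset ℕ) (t : ℝ) : (Kf P t : ℂ) =
    ∑ x ∈ XX P, (Wt P x : ℂ) * Complex.exp (Complex.I * ((Mf P x * t : ℝ) : ℂ)) := by
  unfold Kf XX
  rw [Complex.ofReal_prod]
  simp_rw [factor_expand]
  rw [Finset.prod_univ_sum]
  refine Finset.sum_congr rfl fun x _ => ?_
  rw [Finset.prod_mul_distrib, ← Complex.exp_sum, Wt, Complex.ofReal_prod, Mf, ← Finset.mul_sum]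
  congr 3
  rw [← Complex.ofReal_sum, Finset.mul_sum, Finset.sum_mul]

lemma Kf_cont (P : Finset ℕ) : Continuous (Kf P) := by
  unfold Kf; fun_prop

lemma Kf_le (P : Finset ℕ) (t : ℝ) : ‖Kf P t‖ ≤ 2 ^ P.card := by
  rw [Real.norm_of_nonneg (Kf_nonneg P t)]
  unfold Kf
  refine (Finset.prod_le_prod (g := fun _ => (2 : ℝ)) (fun p _ => ?_) (fun p _ => ?_)).trans ?_
  · linarith [Real.cos_le_one (2 * π * √((p : ℕ) : ℝ) * t)]
  · linarith [Real.neg_one_le_cos (2 * π * √((p : ℕ) : ℝ) * t)]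
  · simp

lemma Kf_integrable (P : Finset ℕ) {h : ℝ → ℝ} {σ : ℝ}
    (hh : IntegrableOn (fun t => h t * rexp (-(σ * t))) (Ioi 0)) :
    IntegrableOn (fun t => Kf P t * (h t * rexp (-(σ * t)))) (Ioi 0) :=
  Integrable.bdd_mul (c := 2 ^ P.card) hh (Kf_cont P).aestronglyMeasurable (ae_of_all _ (Kf_le P))

lemma Kf_int (P : Finset ℕ) {h : ℝ → ℝ} {σ : ℝ}
    (hh : IntegrableOn (fun t => h t * rexp (-(σ * t))) (Ioi 0)) :
    ((∫ t in Ioi (0 : ℝ), Kf P t * (h t * rexp (-(σ * t))) : ℝ) : ℂ) =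
      ∑ x ∈ XX P, (Wt P x : ℂ) *
        ∫ t in Ioi (0 : ℝ), (h t : ℂ) * Complex.exp (-((σ - Complex.I * (Mf P x : ℝ)) * t)) := by
  rw [← integral_complex_ofReal]
  simp_rw [← integral_const_mul]
  rw [← integral_finsetSum _ (fun x _ => (integrable_twist hh (Mf P x)).const_mul _)]
  congr 1
  ext t
  rw [Complex.ofReal_mul, Kf_expand, Finset.sum_mul]
  refine Finset.sum_congr rfl fun x _ => ?_
  push_cast
  rw [show -((σ - Complex.I * (Mf P x : ℝ)) * t : ℂ) = Complex.I * ((Mf P x : ℝ) * t) + -(σ * t) by ring,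
    Complex.exp_add]
  ring

lemma Kf_lim (P : Finset ℕ) {h : ℝ → ℝ} (L : ℝ → ℝ)
    (hh : ∀ σ : ℝ, 0 < σ → IntegrableOn (fun t => h t * rexp (-(σ * t))) (Ioi 0))
    (hl : ∀ μ : ℝ, Tendsto (fun σ : ℝ => (σ : ℂ) ^ 2 * ∫ t in Ioi (0 : ℝ), (h t : ℂ) * Complex.exp (-((σ - Complex.I * μ) * t)))
      (𝓝[>] 0) (𝓝 ((L μ : ℝ) : ℂ))) :
    Tendsto (fun σ : ℝ => σ ^ 2 * ∫ t in Ioi (0 : ℝ), Kf P t * (h t * rexp (-(σ * t)))) (𝓝[>] 0)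
      (𝓝 (∑ x ∈ XX P, Wt P x * L (Mf P x))) := by
  have h1 : Tendsto (fun σ : ℝ => ∑ x ∈ XX P, (Wt P x : ℂ) * ((σ : ℂ) ^ 2 *
        ∫ t in Ioi (0 : ℝ), (h t : ℂ) * Complex.exp (-((σ - Complex.I * (Mf P x : ℝ)) * t)))) (𝓝[>] 0)
        (𝓝 (∑ x ∈ XX P, (Wt P x : ℂ) * ((L (Mf P x) : ℝ) : ℂ))) :=
    tendsto_finsetSum _ fun x _ => (hl (Mf P x)).const_mul _
  have h2 := (Complex.continuous_re.tendsto _).comp h1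
  have e : (∑ x ∈ XX P, (Wt P x : ℂ) * ((L (Mf P x) : ℝ) : ℂ)).re = ∑ x ∈ XX P, Wt P x * L (Mf P x) := by
    simp_rw [← Complex.ofReal_mul]
    rw [← Complex.ofReal_sum, Complex.ofReal_re]
  rw [e] at h2
  refine h2.congr' ?_
  filter_upwards [self_mem_nhdsWithin] with σ hσ
  have h3 := Kf_int P (hh σ hσ)
  simp only [Function.comp]
  have : (∑ x ∈ XX P, (Wt P x : ℂ) * ((σ : ℂ) ^ 2 *
        ∫ t in Ioi (0 : ℝ), (h t : ℂ) * Complex.exp (-((σ - Complex.I * (Mf P x : ℝ)) * t)))) =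
      ((σ ^ 2 * ∫ t in Ioi (0 : ℝ), Kf P t * (h t * rexp (-(σ * t))) : ℝ) : ℂ) := by
    rw [Complex.ofReal_mul, h3, Finset.mul_sum]
    refine Finset.sum_congr rfl fun x _ => ?_
    push_cast; ring
  rw [this, Complex.ofReal_re]

lemma key_ineq (P : Finset ℕ) (A D : ℝ) (hE : ∀ t : ℝ, 0 < t → EE t ≤ A * t + D) :
    ∑ x ∈ XX P, Wt P x * (-(∑' v, limTerm (Mf P x) v)) ≤
      ∑ x ∈ XX P, Wt P x * (if Mf P x = 0 then A else 0) := by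
  have l1 := Kf_lim P (h := EE) (fun μ => -(∑' v, limTerm μ v)) (fun σ hσ => integrable_EE hσ) lim_EE
  have l2 := Kf_lim P (h := fun t => A * t + D) (fun μ => if μ = 0 then A else 0)
    (fun σ hσ => integrable_lin hσ A D) (lim_lin A D)
  refine le_of_tendsto_of_tendsto l1 l2 ?_
  filter_upwards [self_mem_nhdsWithin] with σ hσ
  refine mul_le_mul_of_nonneg_left ?_ (sq_nonneg σ)
  refine setIntegral_mono_on (Kf_integrable P (integrable_EE hσ)) (Kf_integrable P (integrable_lin hσ A D))
    measurableSet_Ioi fun t ht => ?_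
  refine mul_le_mul_of_nonneg_left ?_ (Kf_nonneg P t)
  exact mul_le_mul_of_nonneg_right (hE t ht) (Real.exp_pos _).le

def extz {P : Finset ℕ} (x : P → ℤ) (p : ℕ) : ℤ := if h : p ∈ P then x ⟨p, h⟩ else 0

lemma extz_coe {P : Finset ℕ} (x : P → ℤ) (p : P) : extz x p = x p := by simp [extz]

lemma Mf_ext (P : Finset ℕ) (x : P → ℤ) : Mf P x = 2 * π * ∑ p ∈ P, (extz x p : ℝ) * √(p : ℝ) := by
  rw [← Finset.sum_coe_sort P, Mf]
  simp_rw [extz_coe]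

lemma rhs_eq (P : Finset ℕ) (hP : ∀ q ∈ P, q.Prime) (A : ℝ) :
    ∑ x ∈ XX P, Wt P x * (if Mf P x = 0 then A else 0) = A := by
  rw [Finset.sum_eq_single (0 : P → ℤ)]
  · simp [Wt, wt, Mf]
  · intro x _ hx
    rw [if_neg, mul_zero]
    intro h
    apply hx
    rw [Mf_ext] at h
    have h' : ∑ p ∈ P, (extz x p : ℝ) * √(p : ℝ) = 0 := by
      rcases mul_eq_zero.1 h with h | h
      · exact absurd h (by positivity)
      · exact h
    ext p
    have := coeff_zero hP (extz x) h' p p.2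
    rw [extz_coe] at this
    simpa using this
  · intro h
    exact absurd (by simp [XX, TT]) h

lemma lhs_term_nonneg (P : Finset ℕ) (hP : ∀ q ∈ P, q.Prime) (x : P → ℤ) :
    0 ≤ Wt P x * (-(∑' v, limTerm (Mf P x) v)) := by
  by_cases h : ∃ v, limTerm (Mf P x) v ≠ 0
  · obtain ⟨v, hv⟩ := h
    have hc : v ≠ 0 ∧ 4 * π ^ 2 * qn v = (Mf P x) ^ 2 := by
      by_contra hc; exact hv (by unfold limTerm; rw [if_neg hc])
    have hsq : (∑ p ∈ P, (extz x p : ℝ) * √(p : ℝ)) ^ 2 = ((v.1 ^ 2 + v.2 ^ 2 : ℤ) : ℝ) := by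
      have h2 := hc.2
      rw [Mf_ext, mul_pow] at h2
      have hpi : (4 * π ^ 2) ≠ 0 := by positivity
      apply mul_left_cancel₀ hpi
      rw [show 4 * π ^ 2 = (2 * π) ^ 2 by ring, ← h2]
      unfold qn; push_cast; ring
    have hq := qn_pos hc.1
    have hex : ∃ p : P, x p ≠ 0 := by
      by_contra hall
      push Not at hall
      have : Mf P x = 0 := by simp [Mf, hall]
      rw [this] at hc
      have h3 : 0 < 4 * π ^ 2 * qn v := by positivity
      rw [hc.2] at h3; simp at h3
    obtain ⟨p, hp⟩ := hex
    have hW : Wt P x = -(1 / 2) := by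
      unfold Wt
      rw [Finset.prod_eq_single p]
      · simp [wt, hp]
      · intro q _ hq
        have := coeff_single hP (extz x) _ hsq p.2 (by rw [extz_coe]; exact hp) q q.2
          (fun h => hq (Subtype.ext h))
        rw [extz_coe] at this
        simp [wt, this]
      · simp
    rw [hW]
    have : 0 ≤ ∑' v, limTerm (Mf P x) v := tsum_nonneg (limTerm_nonneg (Mf P x))
    nlinarith
  · push Not at h
    simp [h]

lemma lhs_single (P : Finset ℕ) (p : P) (hp : (p : ℕ).Prime) (h4 : ((p : ℕ) : ZMod 4) = 1) :
    1 / (8 * π) * (1 / ((p : ℕ) : ℝ)) ≤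
      Wt P (Pi.single p 1) * (-(∑' v, limTerm (Mf P (Pi.single p 1)) v)) := by
  have hW : Wt P (Pi.single p 1) = -(1 / 2) := by
    unfold Wt
    rw [Finset.prod_eq_single p]
    · simp [wt]
    · intro q _ hq; simp [wt, hq]
    · simp
  have hM : Mf P (Pi.single p 1) = 2 * π * √((p : ℕ) : ℝ) := by
    unfold Mf
    rw [Finset.sum_eq_single p]
    · simp
    · intro q _ hq; simp [hq]
    · simp
  haveI : Fact (p : ℕ).Prime := ⟨hp⟩
  have hmod : (p : ℕ) % 4 ≠ 3 := by
    intro h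
    have h1 : (((p : ℕ) : ℕ) : ZMod 4) = ((1 : ℕ) : ZMod 4) := by simpa using h4
    rw [ZMod.natCast_eq_natCast_iff'] at h1
    omega
  obtain ⟨a, b, hab⟩ := Nat.Prime.sq_add_sq hmod
  have hppos : (0 : ℝ) < ((p : ℕ) : ℝ) := by exact_mod_cast hp.pos
  have hqv : qn ((a : ℤ), (b : ℤ)) = ((p : ℕ) : ℝ) := by
    rw [← hab]; unfold qn; push_cast; ring
  have hv0 : ((a : ℤ), (b : ℤ)) ≠ (0 : ℤ × ℤ) := by
    intro h
    rw [h] at hqv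
    simp [qn] at hqv
    exact hp.ne_zero (by exact_mod_cast hqv.symm)
  have hle := (summable_limTerm (Mf P (Pi.single p 1))).le_tsum ((a : ℤ), (b : ℤ))
    (fun v _ => limTerm_nonneg _ v)
  have hval : limTerm (Mf P (Pi.single p 1)) ((a : ℤ), (b : ℤ)) = 1 / (4 * π * ((p : ℕ) : ℝ)) := by
    unfold limTerm
    rw [if_pos, hqv]
    refine ⟨hv0, ?_⟩
    rw [hqv, hM, mul_pow, Real.sq_sqrt hppos.le]; ring
  rw [hval] at hle
  rw [hW]
  have e : 1 / (8 * π) * (1 / ((p : ℕ) : ℝ)) = 1 / 2 * (1 / (4 * π * ((p : ℕ) : ℝ))) := by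
    field_simp; norm_num
  rw [e]; linarith

lemma primes_bound (P : Finset ℕ) (hP : ∀ q ∈ P, q.Prime ∧ ((q : ℕ) : ZMod 4) = 1) (A D : ℝ)
    (hE : ∀ t : ℝ, 0 < t → EE t ≤ A * t + D) : 1 / (8 * π) * ∑ p ∈ P, 1 / (p : ℝ) ≤ A := by
  have hP' : ∀ q ∈ P, q.Prime := fun q hq => (hP q hq).1
  have h := key_ineq P A D hE
  rw [rhs_eq P hP' A] at h
  refine le_trans ?_ h
  have hinj : Function.Injective (fun p : P => (Pi.single p 1 : P → ℤ)) := by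
    intro p q hpq
    by_contra hne
    have := congrFun hpq p
    simp [Ne.symm hne, hne] at this
  rw [← Finset.sum_coe_sort P, Finset.mul_sum]
  calc ∑ p : P, 1 / (8 * π) * (1 / ((p : ℕ) : ℝ))
      ≤ ∑ p : P, Wt P (Pi.single p 1) * (-(∑' v, limTerm (Mf P (Pi.single p 1)) v)) :=
        Finset.sum_le_sum fun p _ => lhs_single P p (hP p p.2).1 (hP p p.2).2
    _ = ∑ x ∈ Finset.univ.image (fun p : P => (Pi.single p 1 : P → ℤ)),
          Wt P x * (-(∑' v, limTerm (Mf P x) v)) := by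
        rw [Finset.sum_image (fun p _ q _ h => hinj h)]
    _ ≤ _ := by
        refine Finset.sum_le_sum_of_subset_of_nonneg ?_ (fun x _ _ => lhs_term_nonneg P hP' x)
        intro x hx
        obtain ⟨p, _, rfl⟩ := Finset.mem_image.1 hx
        simp only [XX, Fintype.mem_piFinset]
        intro q
        by_cases h : q = p
        · subst h; simp [TT]
        · simp [TT, h]

lemma EE_unbounded (A D : ℝ) : ¬ ∀ t : ℝ, 0 < t → EE t ≤ A * t + D := by
  intro hE
  apply not_summable_primes
  refine summable_of_sum_le (c := A * (8 * π)) (fun n => by split_ifs <;> positivity) fun u => ?_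
  rw [← Finset.sum_filter]
  have h := primes_bound (u.filter fun n => n.Prime ∧ (n : ZMod 4) = 1)
    (fun q hq => (Finset.mem_filter.1 hq).2) A D hE
  have hpi : 0 < 8 * π := by positivity
  rw [one_div, inv_mul_le_iff₀ hpi] at h
  linarith

lemma Q_eq {t : ℝ} (ht : 0 < t) :
    (t ^ 4) ^ (-(1 : ℝ) / 2) * (Sx0 (t ^ 4) - 2 ^ ((3 : ℝ) / 2) * Real.pi / 3 * t ^ 4) =
      √2 / t * EE t := by
  have h1 : √(t ^ 4) = t ^ 2 := by
    rw [show t ^ 4 = (t ^ 2) ^ 2 by ring, Real.sqrt_sq (by positivity)]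
  have h2 : (t ^ 4) ^ ((1 : ℝ) / 4) = t := by
    rw [← Real.rpow_natCast, ← Real.rpow_mul ht.le]; norm_num
  have h3 : (t ^ 4) ^ (-(1 : ℝ) / 2) = (t ^ 2)⁻¹ := by
    rw [neg_div, Real.rpow_neg (by positivity), ← Real.sqrt_eq_rpow, h1]
  have h4 : (2 : ℝ) ^ ((3 : ℝ) / 2) = 2 * √2 := by
    rw [show (3 : ℝ) / 2 = 1 + 1 / 2 by norm_num, Real.rpow_add (by norm_num), Real.rpow_one,
      ← Real.sqrt_eq_rpow]
  unfold Sx0 EE NN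
  rw [h1, h2, h3, h4]
  simp_rw [← Real.sqrt_eq_rpow]
  field_simp

lemma EE_bound (C X : ℝ) (h : ∀ x : ℝ, X < x →
    x ^ (-(1 : ℝ) / 2) * (Sx0 x - 2 ^ ((3 : ℝ) / 2) * Real.pi / 3 * x) ≤ C) :
    ∃ A D : ℝ, ∀ t : ℝ, 0 < t → EE t ≤ A * t + D := by
  set T : ℝ := max 1 X with hT
  have hT1 : 1 ≤ T := le_max_left _ _
  refine ⟨|C|, NN T, fun t ht => ?_⟩
  have hN := NN_nonneg T
  by_cases htT : t ≤ T
  · have h1 := NN_mono ht.le htT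
    have h2 : EE t ≤ NN t := by
      unfold EE
      have : 0 ≤ 2 * π / 3 * t ^ 3 := by positivity
      linarith
    have : 0 ≤ |C| * t := by positivity
    linarith
  · push Not at htT
    have hX : X < t ^ 4 := by
      have : t ≤ t ^ 4 := le_self_pow₀ (by linarith) (by norm_num)
      linarith [le_max_right 1 X]
    have h1 := h _ hX
    rw [Q_eq ht, div_mul_eq_mul_div, div_le_iff₀ ht] at h1
    have hs : 1 ≤ √2 := by rw [Real.one_le_sqrt]; norm_num
    have h3 : C * t ≤ |C| * t := by gcongr; exact le_abs_self C
    have h4 : 0 ≤ |C| * t := by positivity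
    by_cases hE : 0 ≤ EE t
    · nlinarith
    · linarith

end PartG

/-- `limsup_{x→∞} x^{−1/2}·(S(√x; 0) − (2^{3/2}π/3)·x) = +∞`. -/
theorem limsup_Q_eq_top :
    ∀ C : ℝ, ∀ X : ℝ, ∃ x : ℝ, X < x ∧
      C < x ^ (-(1 : ℝ) / 2) * (Sx0 x - 2 ^ ((3 : ℝ) / 2) * Real.pi / 3 * x) := by
  intro C X
  by_contra hcon
  push Not at hcon
  obtain ⟨A, D, h⟩ := EE_bound C X hcon
  exact EE_unbounded A D h
end

section
/- With S(√x; 0) = √2·x^{1/4}·Σ_{m ∈ ℕ, m ≤ √x} r₂(m)·(√x − m)^{1/2} and c₀ = 2^{3/2}π/3, one has liminf_{x→∞} x^{−1/2}·(S(√x; 0) − c₀·x) = −∞. -/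
open Real

open MeasureTheory

lemma half_disc (c : ℝ) : ∫ y : ℝ, √(c - y ^ 2) = π / 2 * max c 0 := by
  rcases le_or_gt c 0 with hc | hc
  · rw [max_eq_right hc, mul_zero]
    have : ∀ y : ℝ, √(c - y ^ 2) = 0 := fun y => Real.sqrt_eq_zero_of_nonpos (by nlinarith [sq_nonneg y])
    simp [this]
  · rw [max_eq_left hc.le]
    set s := √c with hs
    have hs0 : 0 < s := Real.sqrt_pos.2 hc
    have hsc : s ^ 2 = c := Real.sq_sqrt hc.le
    have h1 : ∫ y : ℝ, √(c - y ^ 2) = s * ∫ y : ℝ, √(c - (s * y) ^ 2) := by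
      have := Measure.integral_comp_mul_left (fun y : ℝ => √(c - y ^ 2)) s
      rw [this, abs_of_pos (inv_pos.2 hs0), smul_eq_mul, ← mul_assoc, mul_inv_cancel₀ hs0.ne', one_mul]
    have h2 : ∀ y : ℝ, √(c - (s * y) ^ 2) = s * √(1 - y ^ 2) := by
      intro y
      rw [show c - (s * y) ^ 2 = c * (1 - y ^ 2) by rw [mul_pow, hsc]; ring,
        Real.sqrt_mul hc.le]
    have h3 : ∫ y : ℝ, √(1 - y ^ 2) = π / 2 := by
      rw [← integral_sqrt_one_sub_sq, intervalIntegral.integral_of_le (by norm_num)]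
      symm
      apply setIntegral_eq_integral_of_forall_compl_eq_zero
      intro x hx
      apply Real.sqrt_eq_zero_of_nonpos
      by_contra h
      push Not at h
      apply hx
      constructor <;> nlinarith
    rw [h1]
    simp_rw [h2]
    rw [integral_const_mul, h3, ← hsc]; ring

/-- Fourier transform of the half-ball profile. -/
noncomputable def AF (u ρ : ℝ) : ℝ :=
  if ρ = 0 then 2 * π / 3 * u ^ 3 else
    sin (2 * π * ρ * u) / (4 * π ^ 2 * ρ ^ 3) - u * cos (2 * π * ρ * u) / (2 * π * ρ ^ 2)

lemma oneD (u ρ : ℝ) (hu : 0 < u) :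
    ∫ x : ℝ, π / 2 * max (u ^ 2 - x ^ 2) 0 * cos (2 * π * ρ * x) = AF u ρ := by
  have h1 : ∫ x : ℝ, π / 2 * max (u ^ 2 - x ^ 2) 0 * cos (2 * π * ρ * x)
      = ∫ x in (-u)..u, π / 2 * (u ^ 2 - x ^ 2) * cos (2 * π * ρ * x) := by
    rw [intervalIntegral.integral_of_le (by linarith)]
    rw [← setIntegral_eq_integral_of_forall_compl_eq_zero (s := Set.Ioc (-u) u)]
    · apply setIntegral_congr_fun measurableSet_Ioc
      intro x hx
      simp only
      rw [max_eq_left]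
      nlinarith [hx.1, hx.2]
    · intro x hx
      rw [max_eq_right]
      · simp
      · by_contra h
        push Not at h
        apply hx
        constructor <;> nlinarith
  rw [h1, AF]
  split_ifs with h0
  · subst h0
    have : ∀ x ∈ Set.uIcc (-u) u, HasDerivAt (fun x : ℝ => π / 2 * (u ^ 2 * x - x ^ 3 / 3))
        (π / 2 * (u ^ 2 - x ^ 2) * cos (2 * π * 0 * x)) x := by
      intro x _
      have := (((hasDerivAt_id x).const_mul (u ^ 2)).sub ((hasDerivAt_pow 3 x).div_const 3)).const_mul (π / 2)
      refine this.congr_deriv ?_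
      simp
    rw [intervalIntegral.integral_eq_sub_of_hasDerivAt this]
    · ring
    · apply Continuous.intervalIntegrable; fun_prop
  · set k := 2 * π * ρ with hk
    have hk0 : k ≠ 0 := by have := pi_ne_zero; positivity
    have : ∀ x ∈ Set.uIcc (-u) u, HasDerivAt (fun x : ℝ => π / 2 * ((u ^ 2 - x ^ 2) * sin (k * x) / k
          - 2 * x * cos (k * x) / k ^ 2 + 2 * sin (k * x) / k ^ 3))
        (π / 2 * (u ^ 2 - x ^ 2) * cos (k * x)) x := by
      intro x _
      have hs : HasDerivAt (fun x : ℝ => sin (k * x)) (cos (k * x) * k) x := by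
        simpa using ((hasDerivAt_id x).const_mul k).sin
      have hc : HasDerivAt (fun x : ℝ => cos (k * x)) (-sin (k * x) * k) x := by
        simpa using ((hasDerivAt_id x).const_mul k).cos
      have := (((((hasDerivAt_pow 2 x).const_sub (u ^ 2)).mul hs).div_const k).sub
        ((((hasDerivAt_id x).const_mul 2).mul hc).div_const (k ^ 2))).add
        ((hs.const_mul 2).div_const (k ^ 3))
      refine (this.const_mul (π / 2)).congr_deriv ?_
      simp; field_simp; ring
    rw [intervalIntegral.integral_eq_sub_of_hasDerivAt this]
    · have hp := pi_ne_zero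
      simp only [mul_neg, sin_neg, cos_neg]
      rw [hk]
      field_simp
      ring
    · apply Continuous.intervalIntegrable; fun_prop

lemma sqrt_ball_integrable (u : ℝ) : Integrable (fun p : ℂ => √(u ^ 2 - ‖p‖ ^ 2)) := by
  apply Continuous.integrable_of_hasCompactSupport (by fun_prop)
  apply HasCompactSupport.of_support_subset_isCompact (isCompact_closedBall (0 : ℂ) |u|)
  intro p hp
  simp only [Function.mem_support] at hp
  simp only [Metric.mem_closedBall, dist_zero_right]
  by_contra h
  push Not at h
  apply hp
  apply Real.sqrt_eq_zero_of_nonpos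
  nlinarith [sq_abs u, abs_nonneg u]

lemma fourier_ball_axis (u ρ : ℝ) (hu : 0 < u) :
    ∫ p : ℂ, √(u ^ 2 - ‖p‖ ^ 2) * cos (2 * π * (ρ * p.re)) = AF u ρ := by
  have hint : Integrable (fun p : ℂ => √(u ^ 2 - ‖p‖ ^ 2) * cos (2 * π * (ρ * p.re))) := by
    refine (sqrt_ball_integrable u).mono (by fun_prop) (ae_of_all _ fun p => ?_)
    rw [norm_mul]
    exact mul_le_of_le_one_right (norm_nonneg _) (abs_cos_le_one _)
  rw [← Complex.volume_preserving_equiv_real_prod.symm.integral_comp'] 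
  have hint' := (Complex.volume_preserving_equiv_real_prod.symm.integrable_comp_emb
    (MeasurableEquiv.measurableEmbedding _)).2 hint
  rw [Measure.volume_eq_prod] at hint' ⊢
  refine (integral_prod _ hint').trans ?_
  rw [← oneD u ρ hu]
  congr 1
  ext x
  rw [← half_disc, ← integral_mul_const]
  congr 1
  ext y
  simp [Complex.sq_norm, Complex.normSq_apply]
  congr 2 <;> ring

lemma fourier_ball (u : ℝ) (hu : 0 < u) (ξ : ℂ) :
    ∫ p : ℂ, √(u ^ 2 - ‖p‖ ^ 2) * cos (2 * π * (ξ.re * p.re + ξ.im * p.im)) = AF u ‖ξ‖ := by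
  rw [← fourier_ball_axis u ‖ξ‖ hu]
  rcases eq_or_ne ξ 0 with h0 | h0
  · subst h0; simp
  have hn : ‖ξ‖ ≠ 0 := norm_ne_zero_iff.2 h0
  let c : Circle := ⟨ξ / ‖ξ‖, by rw [Submonoid.unitSphere]; simp [hn]⟩
  have hm := (rotation c).measurePreserving
  rw [← hm.integral_comp (rotation c).toHomeomorph.measurableEmbedding]
  congr 1
  ext p
  have e : (rotation c) p = ξ / ‖ξ‖ * p := rfl
  have hq : ξ.re ^ 2 + ξ.im ^ 2 = ‖ξ‖ ^ 2 := by rw [Complex.sq_norm, Complex.normSq_apply]; ring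
  rw [LinearIsometryEquiv.norm_map, e]
  congr 3
  have : (ξ / ‖ξ‖ * p) = ((‖ξ‖⁻¹ : ℝ) : ℂ) * (ξ * p) := by push_cast; field_simp
  rw [this, Complex.re_ofReal_mul, Complex.im_ofReal_mul, Complex.mul_re, Complex.mul_im]
  field_simp
  rw [← hq]; ring

/-- Lattice point as a complex number. -/
def lat (v : ℤ × ℤ) : ℂ := ⟨v.1, v.2⟩

lemma lat_norm_sq (v : ℤ × ℤ) : ‖lat v‖ ^ 2 = (v.1 : ℝ) ^ 2 + (v.2 : ℝ) ^ 2 := by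
  rw [Complex.sq_norm, Complex.normSq_apply]; simp [lat]; ring

lemma theta_summable (t : ℝ) (ht : 0 < t) (z : ℂ) :
    Summable (fun n : ℤ => ‖Complex.exp (-π * t * n ^ 2 + 2 * π * z * n)‖) := by
  have h := (summable_jacobiTheta₂_term_iff (-Complex.I * z) (Complex.I * t)).2 (by simpa using ht)
  refine h.norm.congr fun n => ?_
  rw [jacobiTheta₂_term]
  congr 2
  linear_combination (-2 * π * n * z + π * n ^ 2 * t) * Complex.I_sq

lemma theta1_s7 (t : ℝ) (ht : 0 < t) (x : ℝ) :
    (∑' n : ℤ, Complex.exp (-π * t * n ^ 2 + 2 * π * (Complex.I * x) * n)) =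
      1 / (t : ℂ) ^ (1 / 2 : ℂ) * ∑' n : ℤ, Complex.exp (-π / t * (n - x) ^ 2) := by
  rw [Complex.tsum_exp_neg_quadratic (a := (t : ℂ)) (by simpa using ht)]
  congr 2
  ext n
  congr 2
  have := Complex.I_sq
  linear_combination (2 * n * x + x ^ 2 * (Complex.I ^ 2 - 1)) * this

lemma theta1_summable' (t : ℝ) (ht : 0 < t) (x : ℝ) :
    Summable (fun n : ℤ => ‖Complex.exp (-π / t * (n - x) ^ 2)‖) := by
  have h := (theta_summable t⁻¹ (inv_pos.2 ht) ((x / t : ℝ) : ℂ)).mul_left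
    ‖Complex.exp (-π / t * x ^ 2)‖
  refine h.congr fun n => ?_
  rw [← norm_mul, ← Complex.exp_add]
  congr 2
  have : (t : ℂ) ≠ 0 := by exact_mod_cast ht.ne'
  push_cast
  field_simp
  ring

lemma theta2_s7 (t : ℝ) (ht : 0 < t) (p : ℂ) :
    (∑' n : ℤ × ℤ, exp (-π * t * ‖lat n‖ ^ 2) * cos (2 * π * (n.1 * p.re + n.2 * p.im)))
      = ∑' v : ℤ × ℤ, t⁻¹ * exp (-π / t * ‖lat v - p‖ ^ 2) := by
  have h1 := theta1_s7 t ht p.re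
  have h2 := theta1_s7 t ht p.im
  have h := congrArg₂ (· * ·) h1 h2
  rw [tsum_mul_tsum_of_summable_norm (theta_summable t ht _) (theta_summable t ht _),
    mul_mul_mul_comm (1 / (t : ℂ) ^ (1 / 2 : ℂ)),
    tsum_mul_tsum_of_summable_norm (theta1_summable' t ht _) (theta1_summable' t ht _)] at h
  have e1 : 1 / (t : ℂ) ^ (1 / 2 : ℂ) * (1 / (t : ℂ) ^ (1 / 2 : ℂ)) = ((t⁻¹ : ℝ) : ℂ) := by
    have h0 : (t : ℂ) ≠ 0 := by exact_mod_cast ht.ne'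
    rw [div_mul_div_comm, ← Complex.cpow_add _ _ h0]
    norm_num
  have s1 := summable_mul_of_summable_norm (theta_summable t ht (Complex.I * p.re))
    (theta_summable t ht (Complex.I * p.im))
  rw [e1, ← tsum_mul_left] at h
  have h' := congrArg Complex.re h
  rw [Complex.re_tsum s1] at h'
  convert h' using 1
  · congr 1
    ext n
    rw [← Complex.exp_add, Complex.exp_re]
    have e2 : (-π * t * (n.1 : ℂ) ^ 2 + 2 * π * (Complex.I * p.re) * n.1 +
        (-π * t * (n.2 : ℂ) ^ 2 + 2 * π * (Complex.I * p.im) * n.2)) =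
        ((-π * t * ‖lat n‖ ^ 2 : ℝ) : ℂ) + ((2 * π * (n.1 * p.re + n.2 * p.im) : ℝ) : ℂ) * Complex.I := by
      rw [lat_norm_sq]; push_cast; ring
    rw [e2]
    simp [-Complex.ofReal_mul, -Complex.ofReal_add, -Complex.ofReal_neg, -Complex.ofReal_pow]
  · rw [← Complex.ofReal_re (∑' v : ℤ × ℤ, t⁻¹ * exp (-π / t * ‖lat v - p‖ ^ 2)), Complex.ofReal_tsum]
    congr 2
    ext v
    rw [← Complex.exp_add]
    push_cast
    congr 2
    have : (‖lat v - p‖ : ℂ) ^ 2 = (v.1 - p.re) ^ 2 + (v.2 - p.im) ^ 2 := by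
      have : ‖lat v - p‖ ^ 2 = (v.1 - p.re) ^ 2 + (v.2 - p.im) ^ 2 := by
        rw [Complex.sq_norm, Complex.normSq_apply]; simp [lat]; ring
      exact_mod_cast this
    rw [this]; ring

lemma gauss_summable (t : ℝ) (ht : 0 < t) :
    Summable (fun n : ℤ × ℤ => exp (-π * t * ‖lat n‖ ^ 2)) := by
  have s1 := (summable_mul_of_summable_norm (theta_summable t ht 0)
    (theta_summable t ht 0)).norm
  refine s1.congr fun n => ?_
  rw [← Complex.exp_add, Complex.norm_exp, lat_norm_sq]
  congr 1
  simp [← Complex.ofReal_intCast, ← Complex.ofReal_pow]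
  ring

lemma gauss_summable' (t : ℝ) (ht : 0 < t) (p : ℂ) :
    Summable (fun v : ℤ × ℤ => t⁻¹ * exp (-π / t * ‖lat v - p‖ ^ 2)) := by
  have s1 := (summable_mul_of_summable_norm (theta1_summable' t ht p.re)
    (theta1_summable' t ht p.im)).norm
  refine (s1.congr fun n => ?_).mul_left _
  rw [← Complex.exp_add, Complex.norm_exp]
  congr 1
  have : ‖lat n - p‖ ^ 2 = (n.1 - p.re) ^ 2 + (n.2 - p.im) ^ 2 := by
    rw [Complex.sq_norm, Complex.normSq_apply]; simp [lat]; ring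
  rw [this]
  have e : (-π / t * ((n.1 : ℂ) - p.re) ^ 2 + -π / t * ((n.2 : ℂ) - p.im) ^ 2)
    = ((-π / t * ((n.1 - p.re) ^ 2 + (n.2 - p.im) ^ 2) : ℝ) : ℂ) := by push_cast; ring
  rw [e, Complex.ofReal_re]

/-- real Fourier coefficient -/
noncomputable def FC (h : ℂ → ℝ) (n : ℤ × ℤ) : ℝ :=
  ∫ p : ℂ, h p * cos (2 * π * (n.1 * p.re + n.2 * p.im))

lemma poisson_t (h : ℂ → ℝ) (hc : Continuous h) (h0 : ∀ p, 0 ≤ h p) (hi : Integrable h)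
    (B : Finset (ℤ × ℤ)) (t : ℝ) (ht : 0 < t) :
    ∑ v ∈ B, ∫ p : ℂ, t⁻¹ * exp (-π / t * ‖lat v - p‖ ^ 2) * h p ≤
      ∑' n : ℤ × ℤ, exp (-π * t * ‖lat n‖ ^ 2) * FC h n := by
  have hic : ∀ n : ℤ × ℤ, Integrable (fun p : ℂ => h p * cos (2 * π * (n.1 * p.re + n.2 * p.im))) := by
    intro n
    refine hi.mono (by fun_prop) (ae_of_all _ fun p => ?_)
    rw [norm_mul]
    exact mul_le_of_le_one_right (norm_nonneg _) (abs_cos_le_one _)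
  let F : ℤ × ℤ → ℂ → ℝ := fun n p => exp (-π * t * ‖lat n‖ ^ 2) *
    (h p * cos (2 * π * (n.1 * p.re + n.2 * p.im)))
  have hFi : ∀ n, Integrable (F n) := fun n => (hic n).const_mul _
  have hs : Summable fun n => ∫ p, ‖F n p‖ := by
    refine Summable.of_nonneg_of_le (fun n => integral_nonneg fun _ => norm_nonneg _) (fun n => ?_)
      ((gauss_summable t ht).mul_right (∫ p, h p))
    rw [← integral_const_mul]
    apply integral_mono (hFi n).norm (hi.const_mul _)
    intro p
    simp only [F]
    rw [norm_mul, norm_mul, Real.norm_of_nonneg (exp_pos _).le, Real.norm_of_nonneg (h0 p)]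
    gcongr
    exact mul_le_of_le_one_right (h0 p) (abs_cos_le_one _)
  have hsum := hasSum_integral_of_summable_integral_norm hFi hs
  have hFs : ∀ p, Summable fun n => F n p := by
    intro p
    refine Summable.of_norm_bounded ((gauss_summable t ht).mul_right (h p)) (fun n => ?_)
    simp only [F]
    rw [norm_mul, norm_mul, Real.norm_of_nonneg (exp_pos _).le, Real.norm_of_nonneg (h0 p)]
    gcongr
    exact mul_le_of_le_one_right (h0 p) (abs_cos_le_one _)
  have e : (fun n => exp (-π * t * ‖lat n‖ ^ 2) * FC h n) = fun n => ∫ p, F n p := by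
    ext n; simp only [F, FC]; rw [integral_const_mul]
  rw [e, hsum.tsum_eq]
  have hgi : ∀ v : ℤ × ℤ, Integrable fun p : ℂ => t⁻¹ * exp (-π / t * ‖lat v - p‖ ^ 2) * h p := by
    intro v
    refine (hi.const_mul t⁻¹).mono (by fun_prop) (ae_of_all _ fun p => ?_)
    rw [norm_mul, norm_mul, norm_mul]
    gcongr
    apply mul_le_of_le_one_right (norm_nonneg _)
    rw [Real.norm_of_nonneg (exp_pos _).le]
    apply exp_le_one_iff.2
    have := pi_pos
    have : 0 ≤ π / t * ‖lat v - p‖ ^ 2 := by positivity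
    rw [neg_div]; linarith
  rw [← integral_finsetSum _ fun v _ => hgi v]
  have key : ∀ p, (∑' n, F n p) = h p * ∑' v : ℤ × ℤ, t⁻¹ * exp (-π / t * ‖lat v - p‖ ^ 2) := by
    intro p
    rw [← theta2_s7 t ht p, ← tsum_mul_left]
    congr 1; ext n; simp only [F]; ring
  apply integral_mono_of_nonneg
  · refine ae_of_all _ fun p => Finset.sum_nonneg fun v _ => ?_
    have := h0 p
    positivity
  · refine ((hi.mul_const (∑' n, exp (-π * t * ‖lat n‖ ^ 2)))).mono' ?_ ?_
    · have : (fun p => ∑' n, F n p) = fun p => h p * ∑' n : ℤ × ℤ, exp (-π * t * ‖lat n‖ ^ 2) * cos (2 * π * (n.1 * p.re + n.2 * p.im)) := by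
        ext p; rw [key, theta2_s7 t ht]
      rw [this]
      apply Continuous.aestronglyMeasurable
      apply hc.mul
      apply continuous_tsum _ (gauss_summable t ht)
      · intro n p
        rw [norm_mul, Real.norm_of_nonneg (exp_pos _).le]
        exact mul_le_of_le_one_right (exp_pos _).le (abs_cos_le_one _)
      · intro n; fun_prop
    · refine ae_of_all _ fun p => ?_
      rw [← tsum_mul_left]
      apply tsum_of_norm_bounded (((gauss_summable t ht).mul_left (h p))).hasSum
      intro n
      simp only [F]
      rw [norm_mul, norm_mul, Real.norm_of_nonneg (exp_pos _).le, Real.norm_of_nonneg (h0 p), mul_comm]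
      gcongr
      exact mul_le_of_le_one_right (h0 p) (abs_cos_le_one _)
  · refine ae_of_all _ fun p => ?_
    simp only
    rw [key, ← Finset.sum_mul, mul_comm]
    apply mul_le_mul_of_nonneg_left _ (h0 p)
    apply Summable.sum_le_tsum _ _ (gauss_summable' t ht p)
    intro v _; positivity

open Filter Topology in
lemma poisson_ineq (h : ℂ → ℝ) (hc : Continuous h) (h0 : ∀ p, 0 ≤ h p) (hi : Integrable h)
    (hs : Summable (FC h)) (B : Finset (ℤ × ℤ)) :
    ∑ v ∈ B, h (lat v) ≤ ∑' n, FC h n := by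
  have L : Tendsto (fun c : ℝ => ∑ v ∈ B, ∫ p : ℂ, ((π * c)⁻¹)⁻¹ * exp (-π / (π * c)⁻¹ * ‖lat v - p‖ ^ 2) * h p)
      atTop (𝓝 (∑ v ∈ B, h (lat v))) := by
    apply tendsto_finsetSum
    intro v _
    have := Real.tendsto_integral_gaussian_smul' (f := fun p : ℂ => (h p : ℂ)) (hi.ofReal) (v := lat v)
      (by apply Continuous.continuousAt; fun_prop)
    have := (Complex.continuous_re.tendsto _).comp this
    simp only [Complex.ofReal_re] at this
    refine this.congr' ?_
    filter_upwards [eventually_gt_atTop 0] with c hc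
    simp only [Function.comp]
    rw [← Complex.ofReal_re (∫ p : ℂ, ((π * c)⁻¹)⁻¹ * exp (-π / (π * c)⁻¹ * ‖lat v - p‖ ^ 2) * h p),
      ← integral_complex_ofReal]
    congr 2
    ext p
    rw [Complex.finrank_real_complex]
    push_cast
    rw [inv_inv, div_inv_eq_mul, smul_eq_mul]
    norm_num
    left; left
    congr 1; ring
  have R : Tendsto (fun c : ℝ => ∑' n : ℤ × ℤ, exp (-π * (π * c)⁻¹ * ‖lat n‖ ^ 2) * FC h n)
      atTop (𝓝 (∑' n, FC h n)) := by
    apply tendsto_tsum_of_dominated_convergence hs.norm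
    · intro n
      have : Tendsto (fun c : ℝ => exp (-π * (π * c)⁻¹ * ‖lat n‖ ^ 2) * FC h n) atTop
          (𝓝 (exp (-π * 0 * ‖lat n‖ ^ 2) * FC h n)) := by
        apply Tendsto.mul_const
        apply (continuous_exp.tendsto _).comp
        apply Tendsto.mul_const
        apply Tendsto.const_mul
        exact tendsto_inv_atTop_zero.comp (tendsto_id.const_mul_atTop pi_pos)
      simpa using this
    · filter_upwards [eventually_gt_atTop 0] with c hc n
      rw [norm_mul]
      apply mul_le_of_le_one_left (norm_nonneg _)
      rw [Real.norm_of_nonneg (exp_pos _).le]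
      apply exp_le_one_iff.2
      have := pi_pos
      have : 0 ≤ π * (π * c)⁻¹ * ‖lat n‖ ^ 2 := by positivity
      linarith
  apply le_of_tendsto_of_tendsto L R
  filter_upwards [eventually_gt_atTop 0] with c hc'
  have := pi_pos
  exact poisson_t h hc h0 hi B _ (by positivity)

lemma FC_avg (w : ℝ → ℝ) (hw : Continuous w) (a b : ℝ) (ha : 0 < a)
    (hab : a ≤ b) (n : ℤ × ℤ) :
    FC (fun p => ∫ u in a..b, w u * √(u ^ 2 - ‖p‖ ^ 2)) n = ∫ u in a..b, w u * AF u ‖lat n‖ := by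
  rw [FC]
  simp_rw [intervalIntegral.integral_of_le hab, ← integral_mul_const]
  rw [integral_integral_swap]
  · apply setIntegral_congr_fun measurableSet_Ioc
    intro u hu
    simp only
    rw [← fourier_ball u (ha.trans hu.1), ← integral_const_mul]
    congr 1; ext p; rw [mul_assoc]; rfl
  · have h1 : Integrable w (volume.restrict (Set.Ioc a b)) :=
      (hw.integrableOn_Icc (a := a) (b := b)).mono_set Set.Ioc_subset_Icc_self
    have h2 := (sqrt_ball_integrable b).mul_prod h1
    refine h2.mono (by apply Continuous.aestronglyMeasurable; unfold Function.uncurry; fun_prop) ?_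
    have : (volume : Measure ℂ).prod (volume.restrict (Set.Ioc a b)) =
        ((volume : Measure ℂ).prod volume).restrict (Set.univ ×ˢ Set.Ioc a b) := by
      rw [← Measure.prod_restrict, Measure.restrict_univ]
    rw [this]
    filter_upwards [ae_restrict_mem (MeasurableSet.univ.prod measurableSet_Ioc)] with z hz
    simp only [Function.uncurry, norm_mul]
    have hu : z.2 ^ 2 ≤ b ^ 2 := by nlinarith [hz.2.1, hz.2.2]
    calc _ ≤ ‖w z.2‖ * ‖√(z.2 ^ 2 - ‖z.1‖ ^ 2)‖ := 
          mul_le_of_le_one_right (by positivity) (abs_cos_le_one _)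
      _ ≤ _ := by
        rw [mul_comm]
        gcongr
        rw [Real.norm_of_nonneg (sqrt_nonneg _), Real.norm_of_nonneg (sqrt_nonneg _)]
        apply Real.sqrt_le_sqrt; linarith

lemma poisson_avg (w : ℝ → ℝ) (hw : Continuous w) (hw0 : ∀ u, 0 ≤ w u) (a b : ℝ) (ha : 0 < a)
    (hab : a ≤ b) (hs : Summable fun n : ℤ × ℤ => ∫ u in a..b, w u * AF u ‖lat n‖)
    (B : Finset (ℤ × ℤ)) :
    ∫ u in a..b, w u * ∑ v ∈ B, √(u ^ 2 - ‖lat v‖ ^ 2) ≤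
      ∑' n : ℤ × ℤ, ∫ u in a..b, w u * AF u ‖lat n‖ := by
  have e : FC (fun p => ∫ u in a..b, w u * √(u ^ 2 - ‖p‖ ^ 2)) =
      fun n : ℤ × ℤ => ∫ u in a..b, w u * AF u ‖lat n‖ := by
    ext n; exact FC_avg w hw a b ha hab n
  have hc : Continuous (fun p : ℂ => ∫ u in a..b, w u * √(u ^ 2 - ‖p‖ ^ 2)) := by
    apply intervalIntegral.continuous_parametric_intervalIntegral_of_continuous'
    unfold Function.uncurry; fun_prop
  rw [← e] at hs ⊢
  have := poisson_ineq _ hc ?_ ?_ hs B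
  · rw [← intervalIntegral.integral_finsetSum] at this
    · simp_rw [Finset.mul_sum]; exact this
    · intro v _
      apply Continuous.intervalIntegrable; fun_prop
  · intro p
    apply intervalIntegral.integral_nonneg hab
    intro u _
    exact mul_nonneg (hw0 u) (sqrt_nonneg _)
  · apply hc.integrable_of_hasCompactSupport
    apply HasCompactSupport.of_support_subset_isCompact (isCompact_closedBall (0 : ℂ) b)
    intro p hp
    simp only [Function.mem_support] at hp
    simp only [Metric.mem_closedBall, dist_zero_right]
    by_contra h
    push Not at h
    apply hp
    rw [intervalIntegral.integral_of_le hab]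
    apply setIntegral_eq_zero_of_forall_eq_zero
    intro u hu
    rw [Real.sqrt_eq_zero_of_nonpos, mul_zero]
    nlinarith [hu.1, hu.2]

lemma lat_norm_ge (n : ℤ × ℤ) (hn : n ≠ 0) : 1 ≤ ‖lat n‖ := by
  have h : (1 : ℤ) ≤ n.1 ^ 2 + n.2 ^ 2 := by
    by_contra h
    apply hn
    have h1 : n.1 ^ 2 = 0 := by nlinarith [sq_nonneg n.1, sq_nonneg n.2]
    have h2 : n.2 ^ 2 = 0 := by nlinarith [sq_nonneg n.1, sq_nonneg n.2]
    exact Prod.ext (pow_eq_zero_iff two_ne_zero |>.1 h1) (pow_eq_zero_iff two_ne_zero |>.1 h2)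
  have h' : (1 : ℝ) ≤ ‖lat n‖ ^ 2 := by rw [lat_norm_sq]; exact_mod_cast h
  nlinarith [norm_nonneg (lat n)]

lemma summable_cube : Summable (fun n : ℤ × ℤ => (‖lat n‖ ^ 3)⁻¹) := by
  have h := EisensteinSeries.summable_one_div_norm_rpow (k := 3) (by norm_num)
  have h' := (finTwoArrowEquiv ℤ).symm.summable_iff.2 h
  refine Summable.of_nonneg_of_le (fun n => by positivity) (fun n => ?_) h'
  simp only [Function.comp]
  have hle : ‖(finTwoArrowEquiv ℤ).symm n‖ ≤ ‖lat n‖ := by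
    rw [pi_norm_le_iff_of_nonneg (norm_nonneg _)]
    intro i
    have h1 := Complex.abs_re_le_norm (lat n)
    have h2 := Complex.abs_im_le_norm (lat n)
    fin_cases i
    · simpa [lat, Int.norm_eq_abs] using h1
    · simpa [lat, Int.norm_eq_abs] using h2
  rcases eq_or_ne n 0 with rfl | hn
  · have : lat 0 = 0 := Complex.ext (by simp [lat]) (by simp [lat])
    rw [this]; simp
  have hp : 0 < ‖(finTwoArrowEquiv ℤ).symm n‖ := by
    rw [norm_pos_iff]
    intro h
    apply hn
    have := congrArg (finTwoArrowEquiv ℤ) h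
    rw [Equiv.apply_symm_apply] at this
    exact this
  rw [Real.rpow_neg hp.le]
  norm_cast
  gcongr

lemma exists_large_sum (M : ℝ) : ∃ s : Finset (ℤ × ℤ), (0 : ℤ × ℤ) ∉ s ∧
    M ≤ ∑ n ∈ s, (‖lat n‖ ^ 2)⁻¹ := by
  by_contra hcon
  push Not at hcon
  have hs : Summable (fun n : ℤ × ℤ => (‖lat n‖ ^ 2)⁻¹) := by
    apply summable_of_sum_le (c := M) (fun n => by positivity)
    intro s
    have := hcon (s.erase 0) (Finset.notMem_erase _ _)
    rw [Finset.sum_erase] at this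
    · exact this.le
    · have : lat 0 = 0 := Complex.ext (by simp [lat]) (by simp [lat])
      simp [this]
  let f : ℕ × ℕ → ℤ × ℤ := fun x => ((x.1 + 1 : ℕ), (x.2 : ℕ))
  have hf : Function.Injective f := by
    rintro ⟨a, b⟩ ⟨c, d⟩ h
    simp only [f, Prod.mk.injEq, Nat.cast_inj] at h
    ext <;> simp <;> omega
  have h1 := hs.comp_injective hf
  have h2 := h1.prod
  have h3 : Summable (fun a : ℕ => 1 / ((a + 1 : ℕ) : ℝ)) := by
    refine Summable.of_nonneg_of_le (fun a => by positivity) (fun a => ?_) (h2.mul_left 2)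
    have h4 := (h1.prod_factor a).sum_le_tsum (Finset.range (a + 1)) (fun b _ => by simp only [Function.comp]; positivity)
    have h5 : ∑ b ∈ Finset.range (a + 1), (2 * ((a + 1 : ℕ) : ℝ) ^ 2)⁻¹ ≤ 
        ∑ b ∈ Finset.range (a + 1), ((fun n : ℤ × ℤ => (‖lat n‖ ^ 2)⁻¹) ∘ f) (a, b) := by
      apply Finset.sum_le_sum
      intro b hb
      simp only [Function.comp, lat_norm_sq, f]
      have : (b : ℝ) ≤ ((a + 1 : ℕ) : ℝ) := by exact_mod_cast (Finset.mem_range.1 hb).le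
      apply inv_anti₀ (by positivity)
      push_cast at this ⊢
      have hb0 : (0 : ℝ) ≤ b := by positivity
      nlinarith
    rw [Finset.sum_const, Finset.card_range, nsmul_eq_mul] at h5
    have h6 : ((a + 1 : ℕ) : ℝ) * (2 * ((a + 1 : ℕ) : ℝ) ^ 2)⁻¹ = (1 / ((a + 1 : ℕ) : ℝ)) / 2 := by
      field_simp
    rw [h6] at h5
    linarith
  exact Real.not_summable_one_div_natCast ((summable_nat_add_iff 1).1 h3)

lemma recurrence (t : Finset (ℤ × ℤ)) (X : ℝ) :
    ∃ u : ℝ, X < u ∧ ∀ n ∈ t, 1 / 2 ≤ cos (2 * π * ‖lat n‖ * u) := by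
  let x : ℕ → (t → ℝ × ℝ) := fun k n => (cos (2 * π * ‖lat n.1‖ * k), sin (2 * π * ‖lat n.1‖ * k))
  have hx : ∀ k, x k ∈ Metric.closedBall (0 : t → ℝ × ℝ) 1 := by
    intro k
    rw [mem_closedBall_zero_iff, pi_norm_le_iff_of_nonneg zero_le_one]
    intro n
    exact max_le (abs_cos_le_one _) (abs_sin_le_one _)
  obtain ⟨y, -, φ, hφ, hlim⟩ := (isCompact_closedBall (0 : t → ℝ × ℝ) 1).tendsto_subseq hx
  obtain ⟨N, hN⟩ := (Metric.cauchySeq_iff'.1 hlim.cauchySeq) (1 / 2) (by norm_num)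
  obtain ⟨K, hK⟩ := exists_nat_gt (X + φ N)
  let m := max N K
  have hm : (K : ℝ) ≤ φ m := by
    exact_mod_cast (le_max_right N K).trans (hφ.id_le _)
  refine ⟨(φ m : ℝ) - φ N, by linarith, fun n hn => ?_⟩
  have h1 := (dist_pi_lt_iff (by norm_num)).1 (hN m (le_max_left _ _)) ⟨n, hn⟩
  rw [Prod.dist_eq, max_lt_iff] at h1
  simp only [Function.comp, x, Real.dist_eq] at h1
  rw [mul_sub, cos_sub]
  have h2 := abs_lt.1 h1.1
  have h3 := abs_lt.1 h1.2
  have s1 := sin_sq_add_cos_sq (2 * π * ‖lat n‖ * φ m)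
  have s2 := sin_sq_add_cos_sq (2 * π * ‖lat n‖ * φ N)
  nlinarith

lemma sum_convert (u b : ℝ) (hu : 0 ≤ u) (hub : u ≤ b) :
    ∑ m ∈ Finset.range (⌊u ^ 2⌋₊ + 1), (r2 m : ℝ) * √(u ^ 2 - m) =
      ∑ v ∈ Finset.Icc ((-⌈b⌉, -⌈b⌉) : ℤ × ℤ) (⌈b⌉, ⌈b⌉), √(u ^ 2 - ‖lat v‖ ^ 2) := by
  set B := Finset.Icc ((-⌈b⌉, -⌈b⌉) : ℤ × ℤ) (⌈b⌉, ⌈b⌉) with hB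
  have hBm : ∀ v : ℤ × ℤ, ((v.1 ^ 2 + v.2 ^ 2 : ℤ) : ℝ) ≤ u ^ 2 → v ∈ B := by
    intro v hv
    push_cast at hv
    have hcb := Int.le_ceil b
    have h1 : |(v.1 : ℝ)| ≤ ⌈b⌉ := (abs_le_of_sq_le_sq (by nlinarith [sq_nonneg (v.2 : ℝ)]) hu).trans (hub.trans hcb)
    have h2 : |(v.2 : ℝ)| ≤ ⌈b⌉ := (abs_le_of_sq_le_sq (by nlinarith [sq_nonneg (v.1 : ℝ)]) hu).trans (hub.trans hcb)
    rw [abs_le] at h1 h2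
    rw [hB, Finset.mem_Icc]
    refine ⟨⟨?_, ?_⟩, ⟨?_, ?_⟩⟩ <;> simp only <;> norm_cast at h1 h2 <;> omega
  have h1 : ∑ v ∈ B, √(u ^ 2 - ‖lat v‖ ^ 2) =
      ∑ v ∈ B.filter (fun v => ((v.1 ^ 2 + v.2 ^ 2 : ℤ) : ℝ) ≤ u ^ 2), √(u ^ 2 - ‖lat v‖ ^ 2) := by
    symm
    apply Finset.sum_subset (Finset.filter_subset _ _)
    intro v hv hv'
    apply Real.sqrt_eq_zero_of_nonpos
    rw [lat_norm_sq]
    simp only [Finset.mem_filter, not_and, not_le] at hv'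
    have := hv' hv
    push_cast at this
    linarith
  rw [h1, ← Finset.sum_fiberwise_of_maps_to (g := fun v : ℤ × ℤ => (v.1 ^ 2 + v.2 ^ 2).toNat)
    (t := Finset.range (⌊u ^ 2⌋₊ + 1))]
  · apply Finset.sum_congr rfl
    intro m hm
    have hmu : (m : ℝ) ≤ u ^ 2 := by
      rw [Finset.mem_range, Nat.lt_succ_iff] at hm
      exact (Nat.le_floor_iff (by positivity)).1 hm
    set T := (B.filter (fun v => ((v.1 ^ 2 + v.2 ^ 2 : ℤ) : ℝ) ≤ u ^ 2)).filter
      (fun v : ℤ × ℤ => (v.1 ^ 2 + v.2 ^ 2).toNat = m) with hT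
    have hTm : ∀ v, v ∈ T ↔ v.1 ^ 2 + v.2 ^ 2 = (m : ℤ) := by
      intro v
      rw [hT, Finset.mem_filter, Finset.mem_filter]
      have h0 : 0 ≤ v.1 ^ 2 + v.2 ^ 2 := by positivity
      constructor
      · rintro ⟨-, h⟩; omega
      · intro h
        have h' : ((v.1 ^ 2 + v.2 ^ 2 : ℤ) : ℝ) ≤ u ^ 2 := by rw [h]; exact_mod_cast hmu
        exact ⟨⟨hBm v h', h'⟩, by omega⟩
    have hr : r2 m = T.card := by
      rw [r2, ← Set.ncard_coe_finset]
      congr 1; ext v; simp [hTm]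
    rw [hr, ← nsmul_eq_mul, ← Finset.sum_const]
    apply Finset.sum_congr rfl
    intro v hv
    rw [lat_norm_sq]
    have := (hTm v).1 hv
    have : (v.1 : ℝ) ^ 2 + (v.2 : ℝ) ^ 2 = m := by exact_mod_cast this
    rw [this]
  · intro v hv
    rw [Finset.mem_filter] at hv
    rw [Finset.mem_range, Nat.lt_succ_iff]
    apply Nat.le_floor
    have h0 : 0 ≤ v.1 ^ 2 + v.2 ^ 2 := by positivity
    have : (((v.1 ^ 2 + v.2 ^ 2).toNat : ℕ) : ℝ) = ((v.1 ^ 2 + v.2 ^ 2 : ℤ) : ℝ) := by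
      exact_mod_cast congrArg (Int.cast (R := ℝ)) (Int.toNat_of_nonneg h0)
    rw [this]; exact hv.2

lemma hat_split (f : ℝ → ℝ) (hf : Continuous f) (u0 δ : ℝ) (hδ : 0 < δ) :
    ∫ u in (u0 - δ)..(u0 + δ), (δ - |u - u0|) * f u =
      (∫ u in (u0 - δ)..u0, (δ + (u - u0)) * f u) + ∫ u in u0..(u0 + δ), (δ - (u - u0)) * f u := by
  rw [← intervalIntegral.integral_add_adjacent_intervals (b := u0)]
  · congr 1
    · apply intervalIntegral.integral_congr
      intro u hu
      rw [Set.uIcc_of_le (by linarith)] at hu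
      simp only
      rw [abs_of_nonpos (by linarith [hu.2])]; ring
    · apply intervalIntegral.integral_congr
      intro u hu
      rw [Set.uIcc_of_le (by linarith)] at hu
      simp only
      rw [abs_of_nonneg (by linarith [hu.1])]
  · apply Continuous.intervalIntegrable; fun_prop
  · apply Continuous.intervalIntegrable; fun_prop

lemma hat_mass (u0 δ : ℝ) (hδ : 0 < δ) :
    ∫ u in (u0 - δ)..(u0 + δ), (δ - |u - u0|) = δ ^ 2 := by
  have h := hat_split (fun _ => 1) continuous_const u0 δ hδ
  simp only [mul_one] at h
  rw [h]
  have h1 : ∀ x ∈ Set.uIcc (u0 - δ) u0, HasDerivAt (fun x : ℝ => (δ + (x - u0)) ^ 2 / 2) (δ + (x - u0)) x := by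
    intro x _
    have := ((((hasDerivAt_id x).sub_const u0).const_add δ).pow 2).div_const 2
    refine this.congr_deriv ?_
    simp
  have h2 : ∀ x ∈ Set.uIcc u0 (u0 + δ), HasDerivAt (fun x : ℝ => -(δ - (x - u0)) ^ 2 / 2) (δ - (x - u0)) x := by
    intro x _
    have := ((((hasDerivAt_id x).sub_const u0).const_sub δ).pow 2).neg.div_const 2
    refine this.congr_deriv ?_
    simp
  rw [intervalIntegral.integral_eq_sub_of_hasDerivAt h1 (by apply Continuous.intervalIntegrable; fun_prop),
    intervalIntegral.integral_eq_sub_of_hasDerivAt h2 (by apply Continuous.intervalIntegrable; fun_prop)]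
  ring

lemma hat_cos (u0 δ k : ℝ) (hδ : 0 < δ) (hk : k ≠ 0) :
    ∫ u in (u0 - δ)..(u0 + δ), (δ - |u - u0|) * cos (k * u) =
      2 * cos (k * u0) * (1 - cos (k * δ)) / k ^ 2 := by
  rw [hat_split (fun u => cos (k * u)) (by fun_prop) u0 δ hδ]
  have hs : ∀ x, HasDerivAt (fun x : ℝ => sin (k * x)) (cos (k * x) * k) x := by
    intro x; simpa using ((hasDerivAt_id x).const_mul k).sin
  have hc : ∀ x, HasDerivAt (fun x : ℝ => cos (k * x)) (-sin (k * x) * k) x := by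
    intro x; simpa using ((hasDerivAt_id x).const_mul k).cos
  have h1 : ∀ x ∈ Set.uIcc (u0 - δ) u0, HasDerivAt
      (fun x : ℝ => (δ + (x - u0)) * sin (k * x) / k + cos (k * x) / k ^ 2)
      ((δ + (x - u0)) * cos (k * x)) x := by
    intro x _
    have := (((((hasDerivAt_id x).sub_const u0).const_add δ).mul (hs x)).div_const k).add
      ((hc x).div_const (k ^ 2))
    refine this.congr_deriv ?_
    simp; field_simp; ring
  have h2 : ∀ x ∈ Set.uIcc u0 (u0 + δ), HasDerivAt
      (fun x : ℝ => (δ - (x - u0)) * sin (k * x) / k - cos (k * x) / k ^ 2)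
      ((δ - (x - u0)) * cos (k * x)) x := by
    intro x _
    have := (((((hasDerivAt_id x).sub_const u0).const_sub δ).mul (hs x)).div_const k).sub
      ((hc x).div_const (k ^ 2))
    refine this.congr_deriv ?_
    simp; field_simp; ring
  rw [intervalIntegral.integral_eq_sub_of_hasDerivAt h1 (by apply Continuous.intervalIntegrable; fun_prop),
    intervalIntegral.integral_eq_sub_of_hasDerivAt h2 (by apply Continuous.intervalIntegrable; fun_prop)]
  rw [mul_sub k u0 δ, mul_add k u0 δ, cos_sub, cos_add]
  field_simp
  ring

/-- main-term coefficient -/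
noncomputable def GG (δ : ℝ) (n : ℤ × ℤ) : ℝ :=
  1 / (2 * π * ‖lat n‖ ^ 2) * (2 * (1 - cos (2 * π * ‖lat n‖ * δ)) / (2 * π * ‖lat n‖) ^ 2)

lemma GG_nonneg (δ : ℝ) (n : ℤ × ℤ) : 0 ≤ GG δ n := by
  have := pi_pos
  have h := cos_le_one (2 * π * ‖lat n‖ * δ)
  have : 0 ≤ 1 - cos (2 * π * ‖lat n‖ * δ) := by linarith
  unfold GG; positivity

lemma lat_zero : lat 0 = 0 := Complex.ext (by simp [lat]) (by simp [lat])

lemma GG_zero (δ : ℝ) : GG δ 0 = 0 := by simp [GG, lat_zero]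

lemma GG_le (δ : ℝ) (n : ℤ × ℤ) : GG δ n ≤ (‖lat n‖ ^ 3)⁻¹ := by
  rcases eq_or_ne n 0 with rfl | hn
  · rw [GG_zero]; positivity
  have h1 := lat_norm_ge n hn
  set ρ := ‖lat n‖ with hρ
  have h0 : 0 < ρ := by linarith
  have hp := pi_gt_three
  have h := neg_one_le_cos (2 * π * ρ * δ)
  have h2 : GG δ n = (1 - cos (2 * π * ρ * δ)) / (4 * π ^ 3 * ρ ^ 4) := by
    unfold GG; rw [← hρ]; field_simp; ring
  rw [h2, ← one_div, div_le_div_iff₀ (by positivity) (by positivity)]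
  have h3 : (1 - cos (2 * π * ρ * δ)) ≤ 2 := by linarith
  have h4 : (1:ℝ) ≤ π ^ 3 := one_le_pow₀ (by linarith)
  have h5 : 0 < ρ ^ 3 := by positivity
  calc (1 - cos (2 * π * ρ * δ)) * ρ ^ 3 ≤ 2 * ρ ^ 3 := by gcongr
    _ ≤ 4 * 1 * (ρ ^ 3 * 1) := by linarith
    _ ≤ 4 * π ^ 3 * (ρ ^ 3 * ρ) := by gcongr
    _ = 1 * (4 * π ^ 3 * ρ ^ 4) := by ring

lemma GG_ge (δ : ℝ) (hδ : 0 < δ) (n : ℤ × ℤ) (hn : n ≠ 0) (h : ‖lat n‖ * δ ≤ 1 / 2) :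
    2 / π ^ 3 * δ ^ 2 * (‖lat n‖ ^ 2)⁻¹ ≤ GG δ n := by
  have h1 := lat_norm_ge n hn
  unfold GG
  set ρ := ‖lat n‖ with hρ
  have h0 : 0 < ρ := by linarith
  have hp := pi_pos
  have hc : cos (2 * π * ρ * δ) ≤ 1 - 2 / π ^ 2 * (2 * π * ρ * δ) ^ 2 := by
    apply Real.cos_le_one_sub_mul_cos_sq
    rw [abs_of_nonneg (by positivity)]
    nlinarith
  have hc' : 2 / π ^ 2 * (2 * π * ρ * δ) ^ 2 ≤ 1 - cos (2 * π * ρ * δ) := by linarith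
  calc 2 / π ^ 3 * δ ^ 2 * (ρ ^ 2)⁻¹ = 1 / (2 * π * ρ ^ 2) * (2 * (2 / π ^ 2 * (2 * π * ρ * δ) ^ 2) / (2 * π * ρ) ^ 2) := by
        field_simp
        try ring
    _ ≤ _ := by gcongr

lemma GG_summable (δ : ℝ) : Summable (GG δ) :=
  Summable.of_nonneg_of_le (GG_nonneg δ) (GG_le δ) summable_cube

lemma coeff_bound (u0 δ : ℝ) (hδ : 0 < δ) (hu : 1 ≤ u0 - δ) (w : ℝ → ℝ) (hw : Continuous w)
    (hw0 : ∀ u, 0 ≤ w u)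
    (hwu : ∀ u ∈ Set.Icc (u0 - δ) (u0 + δ), w u * u = δ - |u - u0|) (n : ℤ × ℤ) (hn : n ≠ 0) :
    |(∫ u in (u0 - δ)..(u0 + δ), w u * AF u ‖lat n‖) + GG δ n * cos (2 * π * ‖lat n‖ * u0)|
      ≤ δ ^ 2 * (‖lat n‖ ^ 3)⁻¹ := by
  have h1 := lat_norm_ge n hn
  unfold GG
  set ρ := ‖lat n‖ with hρ
  have h0 : 0 < ρ := by linarith
  have hp := pi_gt_three
  have hle : u0 - δ ≤ u0 + δ := by linarith
  have e1 : ∫ u in (u0 - δ)..(u0 + δ), w u * AF u ρ =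
      (∫ u in (u0 - δ)..(u0 + δ), w u * sin (2 * π * ρ * u) / (4 * π ^ 2 * ρ ^ 3)) -
      ∫ u in (u0 - δ)..(u0 + δ), (1 / (2 * π * ρ ^ 2)) * ((δ - |u - u0|) * cos (2 * π * ρ * u)) := by
    rw [← intervalIntegral.integral_sub]
    · apply intervalIntegral.integral_congr
      intro u hu'
      rw [Set.uIcc_of_le hle] at hu'
      simp only
      rw [← hwu u hu', AF, if_neg h0.ne']
      ring
    · apply Continuous.intervalIntegrable; fun_prop
    · apply Continuous.intervalIntegrable; fun_prop
  rw [e1, intervalIntegral.integral_const_mul, hat_cos u0 δ _ hδ (by positivity)]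
  rw [show ∀ z : ℝ, z - 1 / (2 * π * ρ ^ 2) * (2 * cos (2 * π * ρ * u0) * (1 - cos (2 * π * ρ * δ)) / (2 * π * ρ) ^ 2) +
    1 / (2 * π * ρ ^ 2) * (2 * (1 - cos (2 * π * ρ * δ)) / (2 * π * ρ) ^ 2) * cos (2 * π * ρ * u0) = z by intro z; ring]
  rw [← hat_mass u0 δ hδ, ← intervalIntegral.integral_mul_const, ← Real.norm_eq_abs]
  apply intervalIntegral.norm_integral_le_of_norm_le hle
  · refine Filter.Eventually.of_forall fun u hu' => ?_
    have hu1 : u ∈ Set.Icc (u0 - δ) (u0 + δ) := ⟨hu'.1.le, hu'.2⟩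
    rw [← hwu u hu1, norm_div, norm_mul, Real.norm_of_nonneg (hw0 u), Real.norm_of_nonneg (by positivity : 0 ≤ 4 * π ^ 2 * ρ ^ 3), div_eq_mul_inv]
    have hs : ‖sin (2 * π * ρ * u)‖ ≤ 1 := abs_sin_le_one _
    have : 1 ≤ u := by linarith [hu'.1]
    have hw' := hw0 u
    gcongr
    · linarith
    · have : (1:ℝ) ≤ 4 * π ^ 2 := by nlinarith
      exact le_mul_of_one_le_left (by positivity) this
  · apply Continuous.intervalIntegrable; fun_prop

lemma core (C U : ℝ) : ∃ u : ℝ, U < u ∧ 0 < u ∧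
    ∑ m ∈ Finset.range (⌊u ^ 2⌋₊ + 1), (r2 m : ℝ) * √(u ^ 2 - m) < 2 * π / 3 * u ^ 3 + C * u := by
  by_contra hcon
  push Not at hcon
  have hp := pi_pos
  set R := ∑' n : ℤ × ℤ, (‖lat n‖ ^ 3)⁻¹ with hR
  obtain ⟨s, hs0, hsM⟩ := exists_large_sum (π ^ 3 * (R - C + 2))
  set D := ∑ n ∈ s, ‖lat n‖ with hD
  have hD0 : 0 ≤ D := Finset.sum_nonneg fun n _ => norm_nonneg _
  set δ := 1 / (2 * (1 + D)) with hδd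
  have hδ : 0 < δ := by positivity
  have hsδ : ∀ n ∈ s, ‖lat n‖ * δ ≤ 1 / 2 := by
    intro n hn
    have h1 : ‖lat n‖ ≤ D := Finset.single_le_sum (f := fun n => ‖lat n‖) (fun n _ => norm_nonneg _) hn
    rw [hδd, mul_one_div, div_le_div_iff₀ (by positivity) (by norm_num)]
    linarith
  -- finite set with small tail
  obtain ⟨t0, ht0⟩ := (GG_summable δ).hasSum.eventually_const_lt
    (show (∑' n, GG δ n) - δ ^ 2 < ∑' n, GG δ n by nlinarith [sq_pos_of_pos hδ]) |>.exists_forall_of_atTop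
  set t := t0 ∪ s with htd
  have htail := ht0 t Finset.subset_union_left
  obtain ⟨u0, hu0, hcos⟩ := recurrence t (max U 0 + δ + 1)
  have hU : U ≤ max U 0 := le_max_left _ _
  have hU0 : 0 ≤ max U 0 := le_max_right _ _
  let w : ℝ → ℝ := fun u => max (δ - |u - u0|) 0 / max u 1
  have hm1 : ∀ u : ℝ, 0 < max u 1 := fun u => lt_max_of_lt_right one_pos
  have hw : Continuous w := by
    apply Continuous.div (by fun_prop) (by fun_prop)
    intro u; exact (hm1 u).ne'
  have hw0 : ∀ u, 0 ≤ w u := fun u => div_nonneg (le_max_right _ _) (hm1 u).le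
  have hwu : ∀ u ∈ Set.Icc (u0 - δ) (u0 + δ), w u * u = δ - |u - u0| := by
    intro u hu
    have h1 : 1 ≤ u := by linarith [hu.1]
    have h2 : |u - u0| ≤ δ := abs_le.2 ⟨by linarith [hu.1], by linarith [hu.2]⟩
    simp only [w]
    rw [max_eq_left h1, max_eq_left (by linarith)]
    field_simp
  have hle : u0 - δ ≤ u0 + δ := by linarith
  have ha : 0 < u0 - δ := by linarith
  set c : ℤ × ℤ → ℝ := fun n => ∫ u in (u0 - δ)..(u0 + δ), w u * AF u ‖lat n‖ with hc
  set c0 := ∫ u in (u0 - δ)..(u0 + δ), w u * (2 * π / 3 * u ^ 3) with hc0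
  have hcz : c 0 = c0 := by
    simp only [hc, hc0, lat_zero, norm_zero, AF, if_true]
  set r : ℤ × ℤ → ℝ := fun n => if n = 0 then 0 else c n + GG δ n * cos (2 * π * ‖lat n‖ * u0) with hr
  have hrb : ∀ n, ‖r n‖ ≤ δ ^ 2 * (‖lat n‖ ^ 3)⁻¹ := by
    intro n
    simp only [hr]
    split_ifs with h
    · simp; positivity
    · exact coeff_bound u0 δ hδ (by linarith) w hw hw0 hwu n h
  have hrs : Summable r := Summable.of_norm_bounded (summable_cube.mul_left _) hrb
  have hrR : ∑' n, r n ≤ δ ^ 2 * R := by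
    rw [hR, ← tsum_mul_left]
    exact hrs.tsum_le_tsum (fun n => (le_abs_self _).trans (hrb n)) (summable_cube.mul_left _)
  have hGc : Summable fun n => GG δ n * cos (2 * π * ‖lat n‖ * u0) := by
    refine Summable.of_norm_bounded (GG_summable δ) fun n => ?_
    rw [norm_mul, Real.norm_of_nonneg (GG_nonneg δ n)]
    exact mul_le_of_le_one_right (GG_nonneg δ n) (abs_cos_le_one _)
  have hcsum : HasSum c (c0 + ∑' n, r n - ∑' n, GG δ n * cos (2 * π * ‖lat n‖ * u0)) := by
    have h := ((hasSum_ite_eq (0 : ℤ × ℤ) c0).add hrs.hasSum).sub hGc.hasSum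
    have e : (fun b => (if b = 0 then c0 else 0) + r b - GG δ b * cos (2 * π * ‖lat b‖ * u0)) = c := by
      funext n
      by_cases hn : n = 0
      · subst hn; simp [hr, hcz, GG_zero]
      · simp [hr, hn]
    rw [e] at h
    exact h
  have hP := poisson_avg w hw hw0 _ _ ha hle hcsum.summable
    (Finset.Icc ((-⌈u0 + δ⌉, -⌈u0 + δ⌉) : ℤ × ℤ) (⌈u0 + δ⌉, ⌈u0 + δ⌉))
  rw [hcsum.tsum_eq] at hP
  have hL : c0 + C * δ ^ 2 ≤ ∫ u in (u0 - δ)..(u0 + δ), w u * 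
      ∑ v ∈ Finset.Icc ((-⌈u0 + δ⌉, -⌈u0 + δ⌉) : ℤ × ℤ) (⌈u0 + δ⌉, ⌈u0 + δ⌉), √(u ^ 2 - ‖lat v‖ ^ 2) := by
    have e : c0 + C * δ ^ 2 = ∫ u in (u0 - δ)..(u0 + δ), (w u * (2 * π / 3 * u ^ 3) + C * (δ - |u - u0|)) := by
      rw [intervalIntegral.integral_add, intervalIntegral.integral_const_mul, hat_mass u0 δ hδ]
      · apply Continuous.intervalIntegrable; fun_prop
      · apply Continuous.intervalIntegrable; fun_prop
    rw [e]
    apply intervalIntegral.integral_mono_on hle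
    · apply Continuous.intervalIntegrable; fun_prop
    · apply Continuous.intervalIntegrable; fun_prop
    · intro u hu
      have h1 := hcon u (by linarith [hu.1]) (by linarith [hu.1])
      rw [sum_convert u (u0 + δ) (by linarith [hu.1]) hu.2] at h1
      rw [← hwu u hu]
      have := mul_le_mul_of_nonneg_left h1 (hw0 u)
      linarith
  -- lower bound of the oscillating sum
  have hG1 : 3 / 2 * ∑ n ∈ t, GG δ n ≤ ∑' n, (GG δ n + GG δ n * cos (2 * π * ‖lat n‖ * u0)) := by
    rw [Finset.mul_sum]
    refine le_trans (Finset.sum_le_sum fun n hn => ?_)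
      (((GG_summable δ).add hGc).sum_le_tsum t fun n _ => ?_)
    · have := mul_le_mul_of_nonneg_left (hcos n hn) (GG_nonneg δ n)
      linarith
    · have := mul_le_mul_of_nonneg_left (neg_one_le_cos (2 * π * ‖lat n‖ * u0)) (GG_nonneg δ n)
      linarith
  rw [(GG_summable δ).tsum_add hGc] at hG1
  have hst : ∑ n ∈ s, GG δ n ≤ ∑ n ∈ t, GG δ n :=
    Finset.sum_le_sum_of_subset_of_nonneg Finset.subset_union_right fun n _ _ => GG_nonneg δ n
  have hsG : 2 / π ^ 3 * δ ^ 2 * (π ^ 3 * (R - C + 2)) ≤ ∑ n ∈ s, GG δ n := by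
    refine (mul_le_mul_of_nonneg_left hsM (by positivity)).trans ?_
    rw [Finset.mul_sum]
    apply Finset.sum_le_sum
    intro n hn
    exact GG_ge δ hδ n (fun h => hs0 (h ▸ hn)) (hsδ n hn)
  have e3 : 2 / π ^ 3 * δ ^ 2 * (π ^ 3 * (R - C + 2)) = 2 * δ ^ 2 * (R - C + 2) := by field_simp
  rw [e3] at hsG
  have hδ2 : 0 < δ ^ 2 := by positivity
  nlinarith

/-- `liminf_{x→∞} x^{−1/2}·(S(√x; 0) − (2^{3/2}π/3)·x) = −∞`. -/
theorem liminf_Q_eq_bot :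
    ∀ C : ℝ, ∀ X : ℝ, ∃ x : ℝ, X < x ∧
      x ^ (-(1 : ℝ) / 2) * (Sx0 x - 2 ^ ((3 : ℝ) / 2) * Real.pi / 3 * x) < C := by
  intro C X
  obtain ⟨u, hu, hu0, h⟩ := core (C / √2) (max X 1)
  have hX : X < u := (le_max_left _ _).trans_lt hu
  have h1 : 1 < u := (le_max_right _ _).trans_lt hu
  have hs2 : 0 < √2 := by positivity
  have hss : √2 ^ 2 = 2 := Real.sq_sqrt (by norm_num)
  refine ⟨u ^ 4, hX.trans (by nlinarith [sq_nonneg (u ^ 2 - 1), sq_nonneg (u - 1)]), ?_⟩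
  have e1 : √(u ^ 4) = u ^ 2 := by
    rw [show u ^ 4 = (u ^ 2) ^ 2 by ring, Real.sqrt_sq (by positivity)]
  have e2 : (u ^ 4) ^ ((1 : ℝ) / 4) = u := by
    rw [← Real.rpow_natCast, ← Real.rpow_mul hu0.le]; norm_num
  have e3 : (u ^ 4) ^ (-(1 : ℝ) / 2) = (u ^ 2)⁻¹ := by
    rw [← Real.rpow_natCast, ← Real.rpow_mul hu0.le, ← Real.rpow_natCast, ← Real.rpow_neg hu0.le]; norm_num
  have e4 : (2 : ℝ) ^ ((3 : ℝ) / 2) = 2 * √2 := by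
    rw [show (3 : ℝ) / 2 = 1 + 1 / 2 by norm_num, Real.rpow_add (by norm_num), Real.rpow_one, Real.sqrt_eq_rpow]
  rw [Sx0, e1, e2, e3, e4]
  simp_rw [← Real.sqrt_eq_rpow]
  set S := ∑ m ∈ Finset.range (⌊u ^ 2⌋₊ + 1), (r2 m : ℝ) * √(u ^ 2 - m) with hS
  rw [inv_mul_lt_iff₀ (by positivity)]
  have h2 := mul_lt_mul_of_pos_left h (mul_pos hs2 hu0)
  have h3 : √2 * u * (2 * π / 3 * u ^ 3 + C / √2 * u) = 2 * √2 * π / 3 * u ^ 4 + u ^ 2 * C := by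
    field_simp
    try ring
  linarith
end
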